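/- arXiv:1906.02188 — 2 statements merged into one kernel-verified Lean document; each statement's English description precedes it below -/
import Mathlib

section
/- Let (A,m) be an irreducible multiarrangement of rank 3 with two distinct locally heavy hyperplanes H and L. Then (A,m) is not free. Consequently, a rank-3 multiarrangement with two locally heavy hyperplanes is free if and only if it is reducible. -/
open scoped Classical
open MvPolynomial

namespace ArrPaper

variable {K : Type*} [Field K] {ℓ : ℕ}

/-- The coordinate ring `S = K[x₁,…,x_ℓ]`. -/
noncomputable abbrev S (K : Type*) [Field K] (ℓ : ℕ) := MvPolynomial (Fin ℓ) K

/-- The linear form associated to a covector `c`. -/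
noncomputable def linForm (c : Fin ℓ → K) : S K ℓ :=
  ∑ i, MvPolynomial.C (c i) * MvPolynomial.X i

/-- The linear functional associated to a covector. -/
noncomputable def toFunc (c : Fin ℓ → K) : (Fin ℓ → K) →ₗ[K] K :=
  ∑ i, c i • LinearMap.proj i

/-- A (central) hyperplane arrangement, given by a finite set of nonzero,
pairwise non-proportional covectors (defining linear forms). -/
structure Arrangement (K : Type*) [Field K] (ℓ : ℕ) where
  hyps : Finset (Fin ℓ → K)
  ne_zero : ∀ c ∈ hyps, c ≠ 0
  nonparallel : ∀ c ∈ hyps, ∀ c' ∈ hyps, c ≠ c' → ∀ t : K, c' ≠ t • c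

/-- Derivations of the polynomial ring `S`. -/
abbrev Der (K : Type*) [Field K] (ℓ : ℕ) := Derivation K (S K ℓ) (S K ℓ)

/-- `θ` is a logarithmic derivation of the multiarrangement `(A, m)`, i.e.
`θ(α_H) ∈ α_H^{m(H)}·S` for all `H ∈ A`. -/
def IsLogDer (A : Arrangement K ℓ) (m : (Fin ℓ → K) → ℕ) (θ : Der K ℓ) : Prop :=
  ∀ c ∈ A.hyps, (linForm c) ^ (m c) ∣ θ (linForm c)

/-- `θ` is homogeneous of polynomial degree `d`: `θ(α)` is homogeneous of degree `d`
for every linear form `α`. -/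
def IsHomogOfDeg (θ : Der K ℓ) (d : ℕ) : Prop :=
  ∀ c : Fin ℓ → K, (θ (linForm c)).IsHomogeneous d

/-- `θ₁, …, θ_ℓ` form a basis of the `S`-module `D(A,m)`. -/
def IsDerBasis (A : Arrangement K ℓ) (m : (Fin ℓ → K) → ℕ) (θ : Fin ℓ → Der K ℓ) : Prop :=
  (∀ i, IsLogDer A m (θ i)) ∧
  ∀ η : Der K ℓ, IsLogDer A m η → ∃! f : Fin ℓ → S K ℓ, η = ∑ i, f i • θ i

/-- `(A,m)` is free with a homogeneous basis of degrees (exponents) `d`. -/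
def IsFreeWithExp (A : Arrangement K ℓ) (m : (Fin ℓ → K) → ℕ) (d : Fin ℓ → ℕ) : Prop :=
  ∃ θ : Fin ℓ → Der K ℓ, (∀ i, IsHomogOfDeg (θ i) (d i)) ∧ IsDerBasis A m θ

/-- `(A,m)` is a free multiarrangement. -/
def IsFree (A : Arrangement K ℓ) (m : (Fin ℓ → K) → ℕ) : Prop :=
  ∃ d : Fin ℓ → ℕ, IsFreeWithExp A m d

/-- `|m|`, the total multiplicity. -/
def msum (A : Arrangement K ℓ) (m : (Fin ℓ → K) → ℕ) : ℕ := ∑ c ∈ A.hyps, m c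

/-- The rank of an arrangement: the dimension of the span of its covectors. -/
noncomputable def rank (A : Arrangement K ℓ) : ℕ :=
  Module.finrank K (Submodule.span K (A.hyps : Set (Fin ℓ → K)))

/-- `A` is reducible: after a linear change of coordinates it is a product of two
arrangements in complementary (nonzero) subspaces.  In terms of covectors: the
covectors split between two complementary nonzero subspaces of the dual space. -/
def Reducible (A : Arrangement K ℓ) : Prop :=
  ∃ W₁ W₂ : Submodule K (Fin ℓ → K), W₁ ≠ ⊥ ∧ W₂ ≠ ⊥ ∧ W₁ ⊓ W₂ = ⊥ ∧ W₁ ⊔ W₂ = ⊤ ∧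
    ∀ c ∈ A.hyps, c ∈ W₁ ∨ c ∈ W₂

/-- The hyperplanes of the localization at a flat; the flat of codimension `r` is
encoded by the `r`-dimensional subspace `U` of the dual space spanned by the
covectors of the hyperplanes containing it. -/
noncomputable def locHyps (A : Arrangement K ℓ) (U : Submodule K (Fin ℓ → K)) :
    Finset (Fin ℓ → K) :=
  A.hyps.filter (· ∈ U)

/-- `U` encodes a flat of `A` of codimension `r` (an element of `L_r(A)`). -/
def IsFlatOfRank (A : Arrangement K ℓ) (U : Submodule K (Fin ℓ → K)) (r : ℕ) : Prop :=
  Module.finrank K U = r ∧ Submodule.span K (locHyps A U : Set (Fin ℓ → K)) = U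

/-- The localization `A_X` of `A` at the flat encoded by `U`. -/
noncomputable def localize (A : Arrangement K ℓ) (U : Submodule K (Fin ℓ → K)) :
    Arrangement K ℓ where
  hyps := locHyps A U
  ne_zero := fun c hc => A.ne_zero c (Finset.mem_filter.mp hc).1
  nonparallel := fun c hc c' hc' =>
    A.nonparallel c (Finset.mem_filter.mp hc).1 c' (Finset.mem_filter.mp hc').1

/-- `H₀` (given by covector `c₀`) is a heavy hyperplane of `(A,m)`. -/
def IsHeavy (A : Arrangement K ℓ) (m : (Fin ℓ → K) → ℕ) (c₀ : Fin ℓ → K) : Prop :=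
  c₀ ∈ A.hyps ∧ (∑ c ∈ A.hyps.erase c₀, m c) ≤ m c₀

/-- `H₀` (given by covector `c₀`) is a locally heavy hyperplane of `(A,m)`. -/
def IsLocallyHeavy (A : Arrangement K ℓ) (m : (Fin ℓ → K) → ℕ) (c₀ : Fin ℓ → K) : Prop :=
  c₀ ∈ A.hyps ∧ ∀ U : Submodule K (Fin ℓ → K), IsFlatOfRank A U 2 → c₀ ∈ U →
    3 ≤ (locHyps A U).card → (∑ c ∈ (locHyps A U).erase c₀, m c) ≤ m c₀

/-- `b` is the second Betti number of the rank-2 localization of `(A,m)` at `U`: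
the product of the nonzero exponents of this free rank-2 multiarrangement. -/
def IsLocalB2 (A : Arrangement K ℓ) (m : (Fin ℓ → K) → ℕ)
    (U : Submodule K (Fin ℓ → K)) (b : ℕ) : Prop :=
  ∃ d : Fin ℓ → ℕ, IsFreeWithExp (localize A U) m d ∧
    b = ∏ i ∈ Finset.univ.filter (fun i => d i ≠ 0), d i

/-- `b` is the second Betti number `b₂(A,m)` of the multiarrangement `(A,m)`. -/
def IsB2 (A : Arrangement K ℓ) (m : (Fin ℓ → K) → ℕ) (b : ℕ) : Prop :=
  ∃ bloc : Submodule K (Fin ℓ → K) → ℕ,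
    (∀ U, IsFlatOfRank A U 2 → IsLocalB2 A m U (bloc U)) ∧
    b = ∑ᶠ U ∈ {U : Submodule K (Fin ℓ → K) | IsFlatOfRank A U 2}, bloc U

/-- The second Betti number of a simple arrangement:
`b₂(A) = Σ_{X ∈ L₂(A)} (|A_X| - 1)`. -/
noncomputable def b2Simple (A : Arrangement K ℓ) : ℕ :=
  ∑ᶠ U ∈ {U : Submodule K (Fin ℓ → K) | IsFlatOfRank A U 2}, ((locHyps A U).card - 1)

/-- The Euler–Ziegler multiplicity of the restricted hyperplane `H₀ ∩ ker(c)` of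
`A^{H₀}`: `m^{H₀}(X) = |m_X| - m(H₀)`. -/
noncomputable def EZmult (A : Arrangement K ℓ) (m : (Fin ℓ → K) → ℕ)
    (c₀ c : Fin ℓ → K) : ℕ :=
  (∑ c' ∈ A.hyps.filter (· ∈ Submodule.span K ({c₀, c} : Set (Fin ℓ → K))), m c') - m c₀

/-- Two covectors are parallel (define the same hyperplane). -/
def Parallel {n : ℕ} (b b' : Fin n → K) : Prop := ∃ t : K, t ≠ 0 ∧ b' = t • b

/-- The covector on `K^n` obtained by restricting the covector `c` on `K^{n+1}` to the
hyperplane `ker c₀`, transported by the linear isomorphism `e : ker c₀ ≃ K^n`. -/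
noncomputable def resCov {n : ℕ} (c₀ : Fin (n+1) → K)
    (e : ↥(LinearMap.ker (toFunc c₀)) ≃ₗ[K] (Fin n → K)) (c : Fin (n+1) → K) :
    Fin n → K :=
  fun j => toFunc c ((e.symm (Pi.single j 1) : ↥(LinearMap.ker (toFunc c₀))) : Fin (n+1) → K)

/-- `(B, mB)` is (a model, in coordinates, of) the Euler–Ziegler restriction
`(A^{H₀}, m^{H₀})` of `(A,m)` to the hyperplane `H₀ = ker c₀ ∈ A`. -/
def IsEZRes {n : ℕ} (A : Arrangement K (n+1)) (m : (Fin (n+1) → K) → ℕ)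
    (c₀ : Fin (n+1) → K) (B : Arrangement K n) (mB : (Fin n → K) → ℕ) : Prop :=
  c₀ ∈ A.hyps ∧
  ∃ e : ↥(LinearMap.ker (toFunc c₀)) ≃ₗ[K] (Fin n → K),
    (∀ c ∈ A.hyps.erase c₀, ∃ b ∈ B.hyps,
        Parallel b (resCov c₀ e c) ∧ mB b = EZmult A m c₀ c) ∧
    (∀ b ∈ B.hyps, ∃ c ∈ A.hyps.erase c₀, Parallel b (resCov c₀ e c))

/-- A combinatorial equivalence between two arrangements: a bijection between the
hyperplanes inducing an isomorphism of intersection lattices (it preserves the rank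
of every subset of hyperplanes). -/
def CombEquiv (A A' : Arrangement K ℓ) : Prop :=
  ∃ φ : (Fin ℓ → K) → (Fin ℓ → K), Set.BijOn φ ↑A.hyps ↑A'.hyps ∧
    ∀ T : Finset (Fin ℓ → K), T ⊆ A.hyps →
      Module.finrank K (Submodule.span K (T : Set (Fin ℓ → K))) =
      Module.finrank K (Submodule.span K ((T.image φ) : Set (Fin ℓ → K)))

/-!
Let `c₀` be a locally heavy hyperplane of a free multiarrangement. At every rank-2 flat through `c₀`
there is a logarithmic derivation `ψ` of the localization, off by one order along `c₀`, with
`ψ(α₀) = α₀ ^ (m(c₀) - 1)`: start from such a derivation ignoring the other hyperplanes and raise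
their multiplicities one at a time, local heaviness leaving room for the corrections. Multiplying
`ψ` by the powers of the linear forms not belonging to the flat makes it global. The factors needed
for two flats are coprime modulo `α₀`, so by freeness of `D(A, m)` common factors can be cancelled
as along a regular sequence. Going through all the flats removes every factor and yields a
derivation of degree `m(c₀) - 1` that is logarithmic away from `c₀` and maps `α₀` to
`α₀ ^ (m(c₀) - 1)`.

Now let `H` and `L` be locally heavy with `m(L) ≤ m(H)`. The derivation obtained from `L` kills
`α_H`, for degree reasons. Two further hyperplanes span a plane of covectors that meets the plane
spanned by `H` and `L`; evaluating the derivation on a common covector shows that it contains `H`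
or `L`. Hence all further hyperplanes lie in a single plane with `H` or in a single plane with `L`,
and `A` is reducible.

Conversely, if `A` is a product of a planar and a linear arrangement, a basis that satisfies Saito's
criterion and respects the factors is built by raising the multiplicities one at a time.
-/

section LinearForms

/-- The assignment `c ↦ linForm c` as a linear map on covectors. -/
noncomputable def linFormHom : (Fin ℓ → K) →ₗ[K] S K ℓ where
  toFun := linForm
  map_add' c c' := by simp [linForm, add_mul, Finset.sum_add_distrib]
  map_smul' t c := by simp [linForm, mul_assoc, Finset.mul_sum, smul_eq_C_mul]

lemma linForm_add (c c' : Fin ℓ → K) : linForm (c + c') = linForm c + linForm c' :=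
  map_add linFormHom c c'

lemma linForm_sub (c c' : Fin ℓ → K) : linForm (c - c') = linForm c - linForm c' :=
  map_sub linFormHom c c'

lemma linForm_smul (t : K) (c : Fin ℓ → K) : linForm (t • c) = t • linForm c :=
  map_smul linFormHom t c

lemma aeval_linForm {R : Type*} [CommRing R] [Algebra K R] (φ : (Fin ℓ → K) →ₗ[K] R)
    (c : Fin ℓ → K) : aeval (fun i => φ (Pi.single i 1)) (linForm c) = φ c := by
  conv_rhs => rw [pi_eq_sum_univ' c, map_sum]
  simp_rw [map_smul, linForm, map_sum, map_mul, aeval_X, aeval_C, Algebra.smul_def]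

lemma linForm_single (i : Fin ℓ) : linForm (Pi.single i 1 : Fin ℓ → K) = X i := by
  simp [linForm, Pi.single_apply]

lemma linForm_injective : Function.Injective (linForm : (Fin ℓ → K) → S K ℓ) := by
  intro c c' h
  ext i
  rw [← LinearMap.proj_apply (R := K) i c, ← LinearMap.proj_apply (R := K) i c',
    ← aeval_linForm, h, aeval_linForm]

lemma linForm_ne_zero {c : Fin ℓ → K} (hc : c ≠ 0) : linForm c ≠ 0 :=
  (map_ne_zero_iff linFormHom linForm_injective).mpr hc

lemma isHomogeneous_linForm (c : Fin ℓ → K) : (linForm c).IsHomogeneous 1 :=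
  IsHomogeneous.sum _ _ _ fun _ _ => isHomogeneous_C_mul_X _ _

lemma isHomogeneous_linForm_pow (c : Fin ℓ → K) (n : ℕ) : (linForm c ^ n).IsHomogeneous n := by
  simpa using (isHomogeneous_linForm c).pow n

lemma prime_linForm {c : Fin ℓ → K} (hc : c ≠ 0) : Prime (linForm c) := by
  refine Irreducible.prime (irreducible_of_totalDegree_eq_one
    ((isHomogeneous_linForm c).totalDegree (linForm_ne_zero hc)) fun x hx => ?_)
  refine isUnit_iff_ne_zero.mpr ?_
  rintro rfl
  apply linForm_ne_zero hc
  ext d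
  simpa using hx d

lemma linForm_dvd_linForm_iff {c c' : Fin ℓ → K} :
    linForm c ∣ linForm c' ↔ c' ∈ Submodule.span K {c} := by
  constructor
  · intro h
    by_contra hc'
    -- Evaluate at a point `f` of the hyperplane of `c` that is not on the hyperplane of `c'`.
    obtain ⟨f, hf, hc⟩ := Submodule.exists_le_ker_of_notMem hc'
    have hdvd := map_dvd (aeval fun i => f (Pi.single i 1)) h
    rw [aeval_linForm, aeval_linForm, hc (Submodule.mem_span_singleton_self c),
      zero_dvd_iff] at hdvd
    exact hf hdvd
  · intro h
    obtain ⟨t, rfl⟩ := Submodule.mem_span_singleton.mp h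
    exact linForm_smul t c ▸ dvd_smul_of_dvd t dvd_rfl

lemma isRelPrime_linForm {c c' : Fin ℓ → K} (hc : c ≠ 0) (h : c' ∉ Submodule.span K {c}) :
    IsRelPrime (linForm c) (linForm c') :=
  (prime_linForm hc).irreducible.isRelPrime_iff_not_dvd.mpr (linForm_dvd_linForm_iff.not.mpr h)

lemma linForm_pow_dvd_homogeneousComponent {c : Fin ℓ → K} {k : ℕ} {f : S K ℓ}
    (h : linForm c ^ k ∣ f) (n : ℕ) : linForm c ^ k ∣ homogeneousComponent n f := by
  rw [← Ideal.mem_span_singleton] at h ⊢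
  let : GradedAlgebra (homogeneousSubmodule (Fin ℓ) K) := gradedAlgebra
  refine homogeneousComponent_mem_of_mem (Ideal.homogeneous_span _ _ ?_) h n
  rintro x rfl
  exact ⟨k, isHomogeneous_linForm_pow c k⟩

lemma eq_zero_of_linForm_pow_dvd {c : Fin ℓ → K} (hc : c ≠ 0) {k n : ℕ} {f : S K ℓ}
    (h : linForm c ^ k ∣ f) (hf : f.IsHomogeneous n) (hn : n < k) : f = 0 := by
  by_contra hf0
  have hle := totalDegree_le_of_dvd_of_isDomain h hf0
  rw [hf.totalDegree hf0, (isHomogeneous_linForm_pow c k).totalDegree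
    (pow_ne_zero _ (linForm_ne_zero hc))] at hle
  omega

lemma Arrangement.notMem_span_singleton (A : Arrangement K ℓ) {c c' : Fin ℓ → K}
    (hc : c ∈ A.hyps) (hc' : c' ∈ A.hyps) (h : c ≠ c') : c' ∉ Submodule.span K {c} := fun hmem =>
  let ⟨t, ht⟩ := Submodule.mem_span_singleton.mp hmem
  A.nonparallel c hc c' hc' h t ht.symm

end LinearForms

section Derivations

lemma derivation_ext_linForm {θ η : Der K ℓ} (h : ∀ c, θ (linForm c) = η (linForm c)) : θ = η :=
  derivation_ext fun i => linForm_single (K := K) i ▸ h _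

/-- The derivation with prescribed values on linear forms. -/
noncomputable def derOf (φ : (Fin ℓ → K) →ₗ[K] S K ℓ) : Der K ℓ :=
  mkDerivation K fun i => φ (Pi.single i 1)

@[simp]
lemma derOf_linForm (φ : (Fin ℓ → K) →ₗ[K] S K ℓ) (c : Fin ℓ → K) :
    derOf φ (linForm c) = φ c := by
  suffices h : (derOf φ : S K ℓ →ₗ[K] S K ℓ) ∘ₗ linFormHom = φ from LinearMap.congr_fun h c
  refine LinearMap.pi_ext' fun i => LinearMap.ext_ring ?_
  exact (congrArg (derOf φ) (linForm_single i)).trans (mkDerivation_X ..)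

lemma exists_smul_eq_of_forall_dvd {θ : Der K ℓ} {p : S K ℓ} (h : ∀ c, p ∣ θ (linForm c)) :
    ∃ η : Der K ℓ, θ = p • η := by
  choose g hg using h
  refine ⟨mkDerivation K fun i => g (Pi.single i 1), derivation_ext fun i => ?_⟩
  rw [← linForm_single, hg, linForm_single, Derivation.smul_apply, mkDerivation_X, smul_eq_mul]

end Derivations

section BinaryForms

variable {R : Type*} [CommRing R] [Algebra K R]

lemma span_pair_pow_succ (x y : R) (d : ℕ) :
    Submodule.span K {x, y} ^ (d + 1) =
      Submodule.span K {x} * Submodule.span K {x, y} ^ d ⊔ Submodule.span K {y ^ (d + 1)} := by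
  rw [← Set.singleton_pow, ← Submodule.span_pow, Submodule.span_insert]
  set P := Submodule.span K {x}
  set Q := Submodule.span K {y}
  induction d with
  | zero => simp
  | succ d ih =>
    have hle : Q * (P * (P ⊔ Q) ^ d) ≤ P * (P ⊔ Q) ^ (d + 1) := by
      rw [mul_left_comm, pow_succ' (P ⊔ Q)]
      gcongr
      exact le_sup_right
    rw [pow_succ' (P ⊔ Q) (d + 1), Submodule.sup_mul]
    nth_rw 2 [ih]
    rw [Submodule.mul_sup, ← sup_assoc, sup_eq_left.mpr hle, pow_succ' Q (d + 1)]

lemma dvd_of_dvd_smul {r s : R} {t : K} (ht : t ≠ 0) (h : r ∣ t • s) : r ∣ s := by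
  simpa only [smul_smul, inv_mul_cancel₀ ht, one_smul] using dvd_smul_of_dvd t⁻¹ h

lemma exists_dvd_sub_smul_pow (x y : R) {d : ℕ} {f : R} (hf : f ∈ Submodule.span K {x, y} ^ d) :
    ∃ γ : K, x ∣ f - γ • y ^ d := by
  cases d with
  | zero =>
    obtain ⟨γ, rfl⟩ := Submodule.mem_one.mp (pow_zero (Submodule.span K {x, y}) ▸ hf)
    exact ⟨γ, by simp [Algebra.smul_def]⟩
  | succ d =>
    rw [span_pair_pow_succ] at hf
    obtain ⟨_, hf', _, hy, rfl⟩ := Submodule.mem_sup.mp hf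
    obtain ⟨g, -, rfl⟩ := Submodule.mem_span_singleton_mul.mp hf'
    obtain ⟨γ, rfl⟩ := Submodule.mem_span_singleton.mp hy
    exact ⟨γ, by simp⟩

variable [IsDomain R] {x y : R}

lemma exists_eq_pow_mul_of_mem_span_pair_pow (hx : Prime x) (hxy : ¬ x ∣ y) {n e : ℕ} {f : R}
    (hf : f ∈ Submodule.span K {x, y} ^ (n + e)) (h : x ^ n ∣ f) :
    ∃ g ∈ Submodule.span K {x, y} ^ e, f = x ^ n * g := by
  induction n generalizing f with
  | zero => exact ⟨f, by simpa using hf, by simp⟩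
  | succ n ih =>
    rw [add_right_comm, span_pair_pow_succ] at hf
    obtain ⟨_, hf', _, hy, rfl⟩ := Submodule.mem_sup.mp hf
    obtain ⟨g, hg, rfl⟩ := Submodule.mem_span_singleton_mul.mp hf'
    obtain ⟨γ, rfl⟩ := Submodule.mem_span_singleton.mp hy
    have hdvd := (dvd_add_right (dvd_mul_right x g)).mp ((dvd_pow_self x n.succ_ne_zero).trans h)
    have hγ : γ = 0 := by_contra fun hγ => hxy (hx.dvd_of_dvd_pow (dvd_of_dvd_smul hγ hdvd))
    rw [hγ, zero_smul, add_zero, pow_succ', mul_dvd_mul_iff_left hx.ne_zero] at h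
    obtain ⟨g', hg', rfl⟩ := ih hg h
    exact ⟨g', hg', by rw [hγ, zero_smul, add_zero, pow_succ', mul_assoc]⟩

lemma eq_zero_of_mem_span_pair_pow (hx : Prime x) (hxy : ¬ x ∣ y) {n d : ℕ} {f : R}
    (hf : f ∈ Submodule.span K {x, y} ^ d) (h : x ^ n ∣ f) (hdn : d < n) : f = 0 := by
  obtain ⟨g, hg, rfl⟩ := exists_eq_pow_mul_of_mem_span_pair_pow (e := 0) hx hxy hf
    ((pow_dvd_pow x hdn.le).trans h)
  obtain ⟨γ, rfl⟩ := Submodule.mem_one.mp (pow_zero (Submodule.span K {x, y}) ▸ hg)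
  have hdvd : x ∣ γ • 1 := by
    have h' := (pow_dvd_pow x hdn).trans h
    rwa [Nat.succ_eq_add_one, pow_succ, mul_dvd_mul_iff_left (pow_ne_zero d hx.ne_zero),
      Algebra.algebraMap_eq_smul_one] at h'
  have hγ : γ = 0 := by_contra fun hγ =>
    hx.not_isUnit (isUnit_of_dvd_one (dvd_of_dvd_smul hγ hdvd))
  rw [hγ, map_zero, mul_zero]

lemma pow_succ_dvd_or_exists_dvd_sub_mul (hx : Prime x) (hxy : ¬ x ∣ y) {n d k : ℕ} {f₀ f₁ : R}
    (hf₀ : f₀ ∈ Submodule.span K {x, y} ^ d) (hf₁ : f₁ ∈ Submodule.span K {x, y} ^ (d + k))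
    (h₀ : x ^ n ∣ f₀) (h₁ : x ^ n ∣ f₁) :
    x ^ (n + 1) ∣ f₀ ∨ ∃ a ∈ Submodule.span K {x, y} ^ k, x ^ (n + 1) ∣ f₁ - a * f₀ := by
  rcases le_or_gt n d with hnd | hnd
  · obtain ⟨e, rfl⟩ := Nat.exists_eq_add_of_le hnd
    obtain ⟨g₀, hg₀, rfl⟩ := exists_eq_pow_mul_of_mem_span_pair_pow hx hxy hf₀ h₀
    obtain ⟨g₁, hg₁, rfl⟩ :=
      exists_eq_pow_mul_of_mem_span_pair_pow hx hxy (add_assoc n e k ▸ hf₁) h₁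
    obtain ⟨γ₀, hγ₀⟩ := exists_dvd_sub_smul_pow x y hg₀
    obtain ⟨γ₁, hγ₁⟩ := exists_dvd_sub_smul_pow x y hg₁
    by_cases hγ : γ₀ = 0
    · left
      rw [pow_succ]
      exact mul_dvd_mul_left _ (by simpa [hγ] using hγ₀)
    · right
      refine ⟨(γ₁ * γ₀⁻¹) • y ^ k, Submodule.smul_mem _ _ (Submodule.pow_mem_pow _
        (Submodule.subset_span (by simp)) _), ?_⟩
      have hsplit : x ^ n * g₁ - (γ₁ * γ₀⁻¹) • y ^ k * (x ^ n * g₀) = x ^ n *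
          ((g₁ - γ₁ • y ^ (e + k)) - (γ₁ * γ₀⁻¹) • (y ^ k * (g₀ - γ₀ • y ^ e))) := by
        have hcancel : (γ₁ * γ₀⁻¹) • y ^ k * (γ₀ • y ^ e) = γ₁ • y ^ (e + k) := by
          rw [smul_mul_smul_comm, inv_mul_cancel_right₀ hγ, ← pow_add, add_comm]
        rw [← hcancel, ← smul_mul_assoc]
        ring
      rw [hsplit, pow_succ]
      exact mul_dvd_mul_left _ (dvd_sub hγ₁ (dvd_smul_of_dvd _ (hγ₀.mul_left _)))
  · left
    rw [eq_zero_of_mem_span_pair_pow hx hxy hf₀ h₀ hnd]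
    exact dvd_zero _

end BinaryForms

section FormsOn

/-- The forms of degree `d` in the linear forms with covectors in `W`, that is, the image of the
`d`-th symmetric power of `W` in `S`. -/
noncomputable def formsOn (W : Submodule K (Fin ℓ → K)) (d : ℕ) : Submodule K (S K ℓ) :=
  W.map linFormHom ^ d

variable {W : Submodule K (Fin ℓ → K)} {c : Fin ℓ → K} {d e n : ℕ} {f g : S K ℓ}

lemma isHomogeneous_of_mem_formsOn (hf : f ∈ formsOn W d) : f.IsHomogeneous d := by
  rw [← mem_homogeneousSubmodule, ← homogeneousSubmodule_one_pow]
  refine pow_le_pow_left' (Submodule.map_le_iff_le_comap.mpr fun c _ => ?_) d hf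
  exact isHomogeneous_linForm c

lemma mul_mem_formsOn (hf : f ∈ formsOn W d) (hg : g ∈ formsOn W e) :
    f * g ∈ formsOn W (d + e) := by
  rw [formsOn, pow_add]
  exact Submodule.mul_mem_mul hf hg

lemma linForm_pow_mem_formsOn (hc : c ∈ W) (n : ℕ) : linForm c ^ n ∈ formsOn W n :=
  Submodule.pow_mem_pow _ (Submodule.mem_map_of_mem hc) n

lemma finrank_span_pair {c e : Fin ℓ → K} (hc : c ≠ 0) (he : e ∉ Submodule.span K {c}) :
    Module.finrank K (Submodule.span K {c, e}) = 2 := by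
  have hli : LinearIndependent K ![c, e] := (LinearIndependent.pair_iff' hc).mpr fun t ht =>
    he (Submodule.mem_span_singleton.mpr ⟨t, ht⟩)
  rw [← Matrix.range_cons_cons_empty, finrank_span_eq_card hli, Fintype.card_fin]

lemma span_pair_eq_of_finrank_eq_two (hW : Module.finrank K W = 2) {c e : Fin ℓ → K} (hcW : c ∈ W)
    (heW : e ∈ W) (hc : c ≠ 0) (he : e ∉ Submodule.span K {c}) : Submodule.span K {c, e} = W :=
  Submodule.eq_of_le_of_finrank_eq (Submodule.span_le.mpr (Set.pair_subset hcW heW))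
    ((finrank_span_pair hc he).trans hW.symm)

lemma linForm_pow_succ_dvd_or_exists_dvd_sub_mul (hW : Module.finrank K W = 2) (hcW : c ∈ W)
    (hc : c ≠ 0) (hde : d ≤ e) (hf : f ∈ formsOn W d) (hg : g ∈ formsOn W e)
    (hcf : linForm c ^ n ∣ f) (hcg : linForm c ^ n ∣ g) :
    linForm c ^ (n + 1) ∣ f ∨ ∃ a ∈ formsOn W (e - d), linForm c ^ (n + 1) ∣ g - a * f := by
  obtain ⟨c', hc'W, hc'⟩ : ∃ c' ∈ W, c' ∉ Submodule.span K {c} := by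
    by_contra! hle
    have := Submodule.finrank_mono (R := K) (s := W) (t := Submodule.span K {c}) hle
    rw [finrank_span_singleton hc] at this
    omega
  have hmap : W.map linFormHom = Submodule.span K {linForm c, linForm c'} := by
    rw [← span_pair_eq_of_finrank_eq_two hW hcW hc'W hc hc', Submodule.map_span, Set.image_pair]
    rfl
  obtain ⟨k, rfl⟩ := Nat.exists_eq_add_of_le hde
  rw [formsOn, hmap] at hf hg ⊢
  rw [Nat.add_sub_cancel_left]
  exact pow_succ_dvd_or_exists_dvd_sub_mul (prime_linForm hc)
    (linForm_dvd_linForm_iff.not.mpr hc') hf hg hcf hcg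

end FormsOn

section LocalDerivation

/-- The product of the linear forms of the hyperplanes in `T`, taken with multiplicities `m`.
For `T = A.hyps` this is the defining polynomial `Q(A, m)`. -/
noncomputable def definingPoly (T : Finset (Fin ℓ → K)) (m : (Fin ℓ → K) → ℕ) : S K ℓ :=
  ∏ c ∈ T, linForm c ^ m c

lemma linForm_pow_dvd_definingPoly {T : Finset (Fin ℓ → K)} {c : Fin ℓ → K} (hc : c ∈ T)
    (m : (Fin ℓ → K) → ℕ) : linForm c ^ m c ∣ definingPoly T m :=
  Finset.dvd_prod_of_mem (fun c => linForm c ^ m c) hc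

lemma sum_add_single {α : Type*} [DecidableEq α] {T : Finset α} {c : α} (hc : c ∈ T) (m : α → ℕ) :
    ∑ a ∈ T, (m + Pi.single c 1 : α → ℕ) a = ∑ a ∈ T, m a + 1 := by
  simp [Finset.sum_add_distrib, Pi.single_apply, hc]

lemma multiplicity_induction {α : Type*} [DecidableEq α] {T : Finset α} {P : (α → ℕ) → Prop}
    (zero : ∀ m, (∀ c ∈ T, m c = 0) → P m)
    (succ : ∀ m, ∀ c ∈ T, P m → P (m + Pi.single c 1)) (m : α → ℕ) : P m := by
  induction hn : ∑ c ∈ T, m c generalizing m with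
  | zero => exact zero m (Finset.sum_eq_zero_iff.mp hn)
  | succ n ih =>
    obtain ⟨c, hc, hmc⟩ : ∃ c ∈ T, m c ≠ 0 := Finset.exists_ne_zero_of_sum_ne_zero (by omega)
    have hm : m - Pi.single c 1 + Pi.single c 1 = m := tsub_add_cancel_of_le fun a => by
      rcases eq_or_ne a c with rfl | ha
      · simpa using Nat.one_le_iff_ne_zero.mpr hmc
      · simp [ha]
    rw [← hm]
    refine succ _ c hc (ih _ ?_)
    rwa [← hm, sum_add_single hc, Nat.add_right_cancel_iff] at hn

lemma definingPoly_mem_formsOn {U : Submodule K (Fin ℓ → K)} {T : Finset (Fin ℓ → K)}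
    (hT : ∀ c ∈ T, c ∈ U) (m : (Fin ℓ → K) → ℕ) : definingPoly T m ∈ formsOn U (∑ c ∈ T, m c) :=
  SetLike.prod_mem_graded (A := (U.map linFormHom ^ · : ℕ → Submodule K (S K ℓ))) _ _
    fun c hc => linForm_pow_mem_formsOn (hT c hc) _

variable {A : Arrangement K ℓ} {U : Submodule K (Fin ℓ → K)} {c₀ : Fin ℓ → K}
  {T : Finset (Fin ℓ → K)} {n : ℕ}

lemma exists_form_of_multiplicities (hc₀ : c₀ ∈ A.hyps) (hc₀U : c₀ ∈ U)
    (hTA : T ⊆ A.hyps.erase c₀) (hTU : ∀ c ∈ T, c ∈ U) {m : (Fin ℓ → K) → ℕ}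
    (hm : ∑ c ∈ T, m c ≤ n) :
    ∃ P ∈ formsOn U n, ∀ c ∈ T, linForm c ^ m c ∣ P ∧ ¬ linForm c ^ (m c + 1) ∣ P := by
  have hpair {c c'} (hc : c ∈ T) (hc' : c' ∈ A.hyps) (hne : c ≠ c') : ¬ linForm c ∣ linForm c' :=
    linForm_dvd_linForm_iff.not.mpr
      (A.notMem_span_singleton (Finset.mem_of_mem_erase (hTA hc)) hc' hne)
  have hTA' : T ⊆ A.hyps := hTA.trans (Finset.erase_subset _ _)
  refine ⟨definingPoly T m * linForm c₀ ^ (n - ∑ c ∈ T, m c), ?_, fun c hc => ⟨?_, ?_⟩⟩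
  · have hmem := mul_mem_formsOn (definingPoly_mem_formsOn hTU m)
      (linForm_pow_mem_formsOn hc₀U (n - ∑ c ∈ T, m c))
    rwa [Nat.add_sub_cancel' hm] at hmem
  · exact (linForm_pow_dvd_definingPoly hc m).mul_right _
  · have hp := prime_linForm (A.ne_zero c (hTA' hc))
    rw [definingPoly, ← Finset.mul_prod_erase T _ hc, mul_assoc, pow_succ,
      mul_dvd_mul_iff_left (pow_ne_zero _ hp.ne_zero), hp.dvd_mul, hp.dvd_finsetProd_iff]
    rintro (⟨c', hc', hdvd⟩ | hdvd)
    · obtain ⟨hne, hc'⟩ := Finset.mem_erase.mp hc'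
      exact hpair hc (hTA' hc') hne.symm (hp.dvd_of_dvd_pow hdvd)
    · exact hpair hc hc₀ (Finset.ne_of_mem_erase (hTA hc)) (hp.dvd_of_dvd_pow hdvd)

lemma exists_local_derivation (hU : Module.finrank K U = 2) (hc₀ : c₀ ∈ A.hyps) (hc₀U : c₀ ∈ U)
    (hTA : T ⊆ A.hyps.erase c₀) (hTU : ∀ c ∈ T, c ∈ U) (m : (Fin ℓ → K) → ℕ)
    (hm : ∑ c ∈ T, m c ≤ n + 1) :
    ∃ ψ : (Fin ℓ → K) →ₗ[K] S K ℓ, ψ c₀ = linForm c₀ ^ n ∧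
      (∀ c ∈ U, ψ c ∈ formsOn U n) ∧ ∀ c ∈ T, linForm c ^ m c ∣ ψ c := by
  induction m using multiplicity_induction (T := T) with
  | zero m hm0 =>
    obtain ⟨f, hf⟩ := Module.Projective.exists_dual_eq_one K (A.ne_zero c₀ hc₀)
    refine ⟨f.smulRight (linForm c₀ ^ n), by simp [hf], fun c _ => ?_,
      fun c hc => by simp [hm0 c hc]⟩
    exact Submodule.smul_mem _ _ (linForm_pow_mem_formsOn hc₀U n)
  | succ m c hcT ih =>
    rw [sum_add_single hcT, Nat.add_le_add_iff_right] at hm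
    obtain ⟨ψ, hψ₀, hψU, hψT⟩ := ih (hm.trans n.le_succ)
    obtain ⟨P, hPU, hPT⟩ := exists_form_of_multiplicities hc₀ hc₀U hTA hTU hm
    obtain ⟨hc₀c, hcA⟩ := Finset.mem_erase.mp (hTA hcT)
    obtain ⟨h, hhc, hh⟩ :=
      Submodule.exists_le_ker_of_notMem (A.notMem_span_singleton hc₀ hcA hc₀c.symm)
    have hhc₀ : h c₀ = 0 := hh (Submodule.mem_span_singleton_self c₀)
    obtain ⟨a, haU, ha⟩ := (linForm_pow_succ_dvd_or_exists_dvd_sub_mul hU (hTU c hcT)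
      (A.ne_zero c hcA) le_rfl (Submodule.smul_mem _ (h c) hPU) (hψU c (hTU c hcT))
      (dvd_smul_of_dvd _ (hPT c hcT).1) (hψT c hcT)).resolve_left
      fun hdvd => (hPT c hcT).2 (dvd_of_dvd_smul hhc hdvd)
    refine ⟨ψ - a • h.smulRight P, by simp [hψ₀, hhc₀], fun c' hc' => ?_, fun c' hc' => ?_⟩
    · refine sub_mem (hψU c' hc') ?_
      have hmem := mul_mem_formsOn haU (Submodule.smul_mem _ (h c') hPU)
      rwa [tsub_self, zero_add] at hmem
    · rcases eq_or_ne c' c with rfl | hne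
      · simpa using ha
      · rw [Pi.add_apply, Pi.single_eq_of_ne hne, add_zero]
        exact dvd_sub (hψT c' hc') ((dvd_smul_of_dvd _ (hPT c' hc').1).mul_left a)

end LocalDerivation

section LogDer

/-- The module `D(A, m)` of logarithmic derivations. -/
noncomputable def logDer (A : Arrangement K ℓ) (m : (Fin ℓ → K) → ℕ) :
    Submodule (S K ℓ) (Der K ℓ) where
  carrier := {θ | IsLogDer A m θ}
  zero_mem' _ _ := dvd_zero _
  add_mem' hθ hη c hc := dvd_add (hθ c hc) (hη c hc)
  smul_mem' f _ hθ c hc := (hθ c hc).mul_left f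

variable {A : Arrangement K ℓ} {m : (Fin ℓ → K) → ℕ} {c₀ : Fin ℓ → K}

lemma IsDerBasis.nonempty_basis {θ : Fin ℓ → Der K ℓ} (hθ : IsDerBasis A m θ) :
    Nonempty (Module.Basis (Fin ℓ) (S K ℓ) (logDer A m)) := by
  let v : Fin ℓ → logDer A m := fun i => ⟨θ i, hθ.1 i⟩
  have hv : Function.Bijective (Fintype.linearCombination (S K ℓ) v) := by
    refine (Function.bijective_iff_existsUnique _).mpr fun η => ?_
    have h (f : Fin ℓ → S K ℓ) :
        Fintype.linearCombination (S K ℓ) v f = η ↔ (η : Der K ℓ) = ∑ i, f i • θ i := by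
      rw [eq_comm, Subtype.ext_iff, Fintype.linearCombination_apply, Submodule.coe_sum]
      rfl
    simpa only [h] using hθ.2 η η.2
  exact ⟨.ofEquivFun (LinearEquiv.ofBijective _ hv).symm⟩

lemma isLogDer_iff (hc₀ : c₀ ∈ A.hyps) {θ : Der K ℓ} :
    IsLogDer A m θ ↔ linForm c₀ ^ m c₀ ∣ θ (linForm c₀) ∧
      ∀ c ∈ A.hyps.erase c₀, linForm c ^ m c ∣ θ (linForm c) := by
  refine ⟨fun h => ⟨h c₀ hc₀, fun c hc => h c (Finset.mem_of_mem_erase hc)⟩, fun ⟨h₀, h⟩ c hc => ?_⟩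
  rcases eq_or_ne c c₀ with rfl | hcc₀
  · exact h₀
  · exact h c (Finset.mem_erase.mpr ⟨hcc₀, hc⟩)

lemma isLogDer_sub_single_iff (hc₀ : c₀ ∈ A.hyps) {θ : Der K ℓ} :
    IsLogDer A (m - Pi.single c₀ 1) θ ↔ linForm c₀ ^ (m c₀ - 1) ∣ θ (linForm c₀) ∧
      ∀ c ∈ A.hyps.erase c₀, linForm c ^ m c ∣ θ (linForm c) := by
  rw [isLogDer_iff hc₀]
  refine and_congr (by simp) (forall₂_congr fun c hc => ?_)
  simp [Finset.ne_of_mem_erase hc]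

lemma isLogDer_linForm_smul_iff (hc₀ : c₀ ∈ A.hyps) (hm : 0 < m c₀) {θ : Der K ℓ} :
    IsLogDer A m (linForm c₀ • θ) ↔ IsLogDer A (m - Pi.single c₀ 1) θ := by
  rw [isLogDer_iff hc₀, isLogDer_sub_single_iff hc₀]
  refine and_congr ?_ (forall₂_congr fun c hc => ?_)
  · obtain ⟨k, hk⟩ := Nat.exists_eq_add_of_lt hm
    rw [hk, Derivation.smul_apply, smul_eq_mul, zero_add, Nat.add_sub_cancel, pow_succ',
      mul_dvd_mul_iff_left (linForm_ne_zero (A.ne_zero c₀ hc₀))]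
  · obtain ⟨hcc₀, hcA⟩ := Finset.mem_erase.mp hc
    have hcop : IsRelPrime (linForm c ^ m c) (linForm c₀) := (isRelPrime_linForm (A.ne_zero c hcA)
      (A.notMem_span_singleton hcA hc₀ hcc₀)).pow_left
    exact ⟨hcop.dvd_of_dvd_mul_left, fun h => h.mul_left _⟩

end LogDer

section RegularPairs

lemma exists_retraction {c₀ : Fin ℓ → K} (hc₀ : c₀ ≠ 0) :
    ∃ π : S K ℓ →ₐ[K] S K ℓ, (∀ f, linForm c₀ ∣ f - π f) ∧ π (linForm c₀) = 0 ∧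
      ∀ c, ∃ t : K, π (linForm c) = linForm (c - t • c₀) := by
  obtain ⟨φ, hφ⟩ := Module.Projective.exists_dual_eq_one K hc₀
  let p : (Fin ℓ → K) →ₗ[K] (Fin ℓ → K) := LinearMap.id - φ.smulRight c₀
  have hπ (c : Fin ℓ → K) :
      aeval (fun i => (linFormHom ∘ₗ p) (Pi.single i 1)) (linForm c) = linForm (c - φ c • c₀) :=
    aeval_linForm _ c
  refine ⟨_, fun f => ?_, ?_, fun c => ⟨φ c, hπ c⟩⟩
  · induction f using MvPolynomial.induction_on with
    | C a => simp
    | add f g hf hg => simpa only [map_add, add_sub_add_comm] using dvd_add hf hg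
    | mul_X f i hf =>
      rw [← linForm_single, map_mul, hπ, linForm_sub, linForm_smul, mul_sub, sub_sub_eq_add_sub,
        add_sub_right_comm, ← sub_mul]
      exact dvd_add (hf.mul_right _) ((dvd_smul_of_dvd _ dvd_rfl).mul_left _)
  · rw [hπ, hφ, one_smul, sub_self]
    exact map_zero linFormHom

lemma mem_span_pair_of_mul_mem {R : Type*} [CommRing R] [DecompositionMonoid R] {π : R →+* R}
    {p g h a : R} (hπ : ∀ f, p ∣ f - π f) (hp : π p = 0) (hgh : IsRelPrime (π g) (π h))
    (ha : h * a ∈ Ideal.span {p, g}) : a ∈ Ideal.span {p, g} := by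
  obtain ⟨u, v, huv⟩ := Ideal.mem_span_pair.mp ha
  have hdvd : π g ∣ π h * π a := ⟨π v, by simpa [hp, mul_comm] using (congrArg π huv).symm⟩
  obtain ⟨w, hw⟩ := hgh.dvd_of_dvd_mul_left hdvd
  obtain ⟨r, hr⟩ := hπ a
  obtain ⟨s, hs⟩ := hπ g
  exact Ideal.mem_span_pair.mpr ⟨r - s * w, w, by linear_combination w * hs - hr - hw⟩

lemma mem_span_pair_of_definingPoly_mul_mem {c₀ : Fin ℓ → K} (hc₀ : c₀ ≠ 0)
    {T T' : Finset (Fin ℓ → K)} (hT : ∀ c ∈ T, c ∉ Submodule.span K {c₀})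
    (hTT' : ∀ c ∈ T, ∀ c' ∈ T', c' ∉ Submodule.span K {c₀, c}) {m : (Fin ℓ → K) → ℕ} {a : S K ℓ}
    (ha : definingPoly T' m * a ∈ Ideal.span {linForm c₀, definingPoly T m}) :
    a ∈ Ideal.span {linForm c₀, definingPoly T m} := by
  obtain ⟨π, hπ, hπ₀, hπc⟩ := exists_retraction hc₀
  refine mem_span_pair_of_mul_mem (π := π.toRingHom) hπ hπ₀ ?_ ha
  simp only [definingPoly, map_prod, map_pow]
  refine IsRelPrime.prod_left fun c hc => IsRelPrime.prod_right fun c' hc' => IsRelPrime.pow ?_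
  obtain ⟨t, ht⟩ := hπc c
  obtain ⟨t', ht'⟩ := hπc c'
  change IsRelPrime (π (linForm c)) (π (linForm c'))
  rw [ht, ht']
  refine isRelPrime_linForm (fun h => hT c hc ?_) fun h => hTT' c hc c' hc' ?_
  · rw [sub_eq_zero.mp h]
    exact Submodule.smul_mem _ _ (Submodule.mem_span_singleton_self c₀)
  · obtain ⟨s, hs⟩ := Submodule.mem_span_singleton.mp h
    refine Submodule.mem_span_pair.mpr ⟨t' - s * t, s, ?_⟩
    rw [eq_sub_iff_add_eq] at hs
    rw [← hs]
    module

lemma exists_eq_smul_add_smul_of_basis {ι R M : Type*} [Finite ι] [CommRing R] [AddCommGroup M]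
    [Module R M] {N : Submodule R M} (b : Module.Basis ι R N) {p g h : R}
    (hreg : ∀ a, h * a ∈ Ideal.span {p, g} → a ∈ Ideal.span {p, g}) {x y z : M} (hx : x ∈ N)
    (hy : y ∈ N) (hz : z ∈ N) (hxyz : h • x = p • y + g • z) :
    ∃ y' ∈ N, ∃ z' ∈ N, x = p • y' + g • z' := by
  have := Fintype.ofFinite ι
  lift x to N using hx
  lift y to N using hy
  lift z to N using hz
  have hN : h • x = p • y + g • z := Subtype.ext hxyz
  have hcoord (i : ι) : ∃ u v, u * p + v * g = b.equivFun x i := by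
    refine Ideal.mem_span_pair.mp (hreg _ (Ideal.mem_span_pair.mpr
      ⟨b.equivFun y i, b.equivFun z i, ?_⟩))
    simpa [mul_comm] using (congrFun (congrArg b.equivFun hN) i).symm
  choose u v huv using hcoord
  suffices hsum : x = p • b.equivFun.symm u + g • b.equivFun.symm v from
    ⟨_, (b.equivFun.symm u).2, _, (b.equivFun.symm v).2, congrArg Subtype.val hsum⟩
  refine b.equivFun.injective (funext fun i => ?_)
  simp only [map_add, map_smul, LinearEquiv.apply_symm_apply, Pi.add_apply, Pi.smul_apply,
    smul_eq_mul, ← huv, mul_comm]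

end RegularPairs

section Residues

variable {A : Arrangement K ℓ} {m : (Fin ℓ → K) → ℕ} {c₀ : Fin ℓ → K}

/-- The ideal of all `r` such that some derivation in `D(A, m - δ)`, where `δ` is the indicator
function of `c₀`, has value `r * linForm c₀ ^ (m c₀ - 1)` at `linForm c₀` modulo
`linForm c₀ ^ m c₀`. It measures how far `D(A, m - δ)` is from containing a derivation of the
smallest conceivable degree at `c₀`. -/
noncomputable def residueIdeal (A : Arrangement K ℓ) (m : (Fin ℓ → K) → ℕ) (c₀ : Fin ℓ → K) :
    Ideal (S K ℓ) where
  carrier := {r | ∃ η, IsLogDer A (m - Pi.single c₀ 1) η ∧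
    linForm c₀ ^ m c₀ ∣ η (linForm c₀) - r * linForm c₀ ^ (m c₀ - 1)}
  zero_mem' := ⟨0, fun _ _ => dvd_zero _, by simp⟩
  add_mem' := by
    rintro r s ⟨η, hη, hr⟩ ⟨θ, hθ, hs⟩
    refine ⟨η + θ, (logDer _ _).add_mem hη hθ, ?_⟩
    rw [Derivation.add_apply, add_mul, add_sub_add_comm]
    exact dvd_add hr hs
  smul_mem' := by
    rintro f r ⟨η, hη, hr⟩
    refine ⟨f • η, (logDer _ _).smul_mem f hη, ?_⟩
    rw [Derivation.smul_apply, smul_eq_mul, smul_eq_mul, mul_assoc, ← mul_sub]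
    exact hr.mul_left f

lemma exists_sub_smul_isLogDer (hc₀ : c₀ ∈ A.hyps) (hm : 0 < m c₀) {ι : Type*} [Finite ι]
    (b : Module.Basis ι (S K ℓ) (logDer A m)) {g h : S K ℓ} (hg : ¬ linForm c₀ ∣ g)
    (hreg : ∀ a, h * a ∈ Ideal.span {linForm c₀, g} → a ∈ Ideal.span {linForm c₀, g})
    {η ζ : Der K ℓ} (hη : IsLogDer A (m - Pi.single c₀ 1) η)
    (hζ : IsLogDer A (m - Pi.single c₀ 1) ζ) (hηζ : IsLogDer A m (h • η - g • ζ)) :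
    ∃ σ, IsLogDer A (m - Pi.single c₀ 1) σ ∧ IsLogDer A m (η - g • σ) := by
  have hp := prime_linForm (A.ne_zero c₀ hc₀)
  obtain ⟨ξ, hξ, ω, hω, heq⟩ := exists_eq_smul_add_smul_of_basis b hreg
    ((isLogDer_linForm_smul_iff hc₀ hm).mpr hη) hηζ ((isLogDer_linForm_smul_iff hc₀ hm).mpr hζ)
    (by module)
  have heq_apply (f : S K ℓ) : linForm c₀ * η f = linForm c₀ * ξ f + g * ω f :=
    DFunLike.congr_fun heq f
  obtain ⟨σ, rfl⟩ : ∃ σ, ω = linForm c₀ • σ := exists_smul_eq_of_forall_dvd fun c =>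
    (hp.dvd_or_dvd ⟨η (linForm c) - ξ (linForm c), by
      linear_combination -heq_apply (linForm c)⟩).resolve_left hg
  refine ⟨σ, (isLogDer_linForm_smul_iff hc₀ hm).mp hω, ?_⟩
  have hξ_eq : η - g • σ = ξ := derivation_ext_linForm fun c => mul_left_cancel₀ hp.ne_zero <| by
    have h := heq_apply (linForm c)
    rw [Derivation.smul_apply, smul_eq_mul] at h
    rw [Derivation.sub_apply, Derivation.smul_apply, smul_eq_mul]
    linear_combination h
  exact hξ_eq ▸ hξ

lemma mem_residueIdeal_of_mul_mem (hc₀ : c₀ ∈ A.hyps) (hm : 0 < m c₀) {ι : Type*} [Finite ι]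
    (b : Module.Basis ι (S K ℓ) (logDer A m)) {g h r : S K ℓ} (hg : ¬ linForm c₀ ∣ g)
    (hreg : ∀ a, h * a ∈ Ideal.span {linForm c₀, g} → a ∈ Ideal.span {linForm c₀, g})
    (hrg : r * g ∈ residueIdeal A m c₀) (hrh : r * h ∈ residueIdeal A m c₀) :
    r ∈ residueIdeal A m c₀ := by
  obtain ⟨η, hη, hηg⟩ := hrg
  obtain ⟨ζ, hζ, hζh⟩ := hrh
  have hηζ : IsLogDer A (m - Pi.single c₀ 1) (h • η - g • ζ) :=
    (logDer _ _).sub_mem ((logDer _ _).smul_mem h hη) ((logDer _ _).smul_mem g hζ)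
  -- The residues of `h • η` and `g • ζ` agree, so their difference gains one order along `c₀`.
  have hgain : IsLogDer A m (h • η - g • ζ) := by
    refine (isLogDer_iff hc₀).mpr ⟨?_, ((isLogDer_sub_single_iff hc₀).mp hηζ).2⟩
    convert dvd_sub (hηg.mul_left h) (hζh.mul_left g) using 1
    simp only [Derivation.sub_apply, Derivation.smul_apply, smul_eq_mul]
    ring
  obtain ⟨σ, hσ, hησ⟩ := exists_sub_smul_isLogDer hc₀ hm b hg hreg hη hζ hgain
  have hcop : IsRelPrime (linForm c₀ ^ m c₀) g :=
    ((prime_linForm (A.ne_zero c₀ hc₀)).irreducible.isRelPrime_iff_not_dvd.mpr hg).pow_left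
  refine ⟨σ, hσ, hcop.dvd_of_dvd_mul_left ?_⟩
  convert dvd_sub hηg ((isLogDer_iff hc₀).mp hησ).1 using 1
  simp only [Derivation.sub_apply, Derivation.smul_apply, smul_eq_mul]
  ring

lemma definingPoly_inter_mem_residueIdeal (hc₀ : c₀ ∈ A.hyps) (hm : 0 < m c₀) {ι : Type*}
    [Finite ι] (b : Module.Basis ι (S K ℓ) (logDer A m)) {T T' : Finset (Fin ℓ → K)}
    (hT₀ : ∀ c ∈ T, c ∉ Submodule.span K {c₀})
    (hTT' : ∀ c ∈ T \ T', ∀ c' ∈ T' \ T, c' ∉ Submodule.span K {c₀, c})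
    (hT : definingPoly T m ∈ residueIdeal A m c₀) (hT' : definingPoly T' m ∈ residueIdeal A m c₀) :
    definingPoly (T ∩ T') m ∈ residueIdeal A m c₀ := by
  have hp := prime_linForm (A.ne_zero c₀ hc₀)
  have hT₀' : ∀ c ∈ T \ T', c ∉ Submodule.span K {c₀} := fun c hc => hT₀ c (Finset.sdiff_subset hc)
  refine mem_residueIdeal_of_mul_mem hc₀ hm b (g := definingPoly (T \ T') m)
    (h := definingPoly (T' \ T) m) ?_
    (fun a => mem_span_pair_of_definingPoly_mul_mem (A.ne_zero c₀ hc₀) hT₀' hTT') ?_ ?_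
  · rw [definingPoly, hp.dvd_finsetProd_iff]
    rintro ⟨c, hc, hdvd⟩
    exact hT₀' c hc (linForm_dvd_linForm_iff.mp (hp.dvd_of_dvd_pow hdvd))
  · rwa [definingPoly, definingPoly, Finset.prod_inter_mul_prod_sdiff]
  · rwa [Finset.inter_comm, definingPoly, definingPoly, Finset.prod_inter_mul_prod_sdiff]

lemma isFlatOfRank_span_pair {c₁ : Fin ℓ → K} (hc₀ : c₀ ∈ A.hyps) (hc₁ : c₁ ∈ A.hyps)
    (h : c₀ ≠ c₁) : IsFlatOfRank A (Submodule.span K {c₀, c₁}) 2 := by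
  refine ⟨finrank_span_pair (A.ne_zero c₀ hc₀) (A.notMem_span_singleton hc₀ hc₁ h), ?_⟩
  refine le_antisymm (Submodule.span_le.mpr fun c hc => (Finset.mem_filter.mp hc).2)
    (Submodule.span_mono (Set.pair_subset ?_ ?_))
  · exact Finset.mem_filter.mpr ⟨hc₀, Submodule.mem_span_of_mem (.inl rfl)⟩
  · exact Finset.mem_filter.mpr ⟨hc₁, Submodule.mem_span_of_mem (.inr rfl)⟩

lemma IsLocallyHeavy.exists_derivation_at_flat {c₁ : Fin ℓ → K} (h₀ : IsLocallyHeavy A m c₀)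
    (hc₁ : c₁ ∈ A.hyps.erase c₀) :
    ∃ ψ : (Fin ℓ → K) →ₗ[K] S K ℓ, ψ c₀ = linForm c₀ ^ (m c₀ - 1) ∧
      ∀ c ∈ (locHyps A (Submodule.span K {c₀, c₁})).erase c₀, linForm c ^ m c ∣ ψ c := by
  obtain ⟨hne, hc₁A⟩ := Finset.mem_erase.mp hc₁
  have hflat := isFlatOfRank_span_pair h₀.1 hc₁A hne.symm
  set U := Submodule.span K {c₀, c₁}
  have hc₀U : c₀ ∈ U := Submodule.mem_span_of_mem (.inl rfl)
  have hc₁U : c₁ ∈ U := Submodule.mem_span_of_mem (.inr rfl)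
  rcases le_or_gt 3 (locHyps A U).card with hcard | hcard
  · have hle : ∑ c ∈ (locHyps A U).erase c₀, m c ≤ m c₀ := h₀.2 U hflat hc₀U hcard
    obtain ⟨ψ, hψ₀, -, hψ⟩ := exists_local_derivation hflat.1 h₀.1 hc₀U
      (T := (locHyps A U).erase c₀) (n := m c₀ - 1)
      (Finset.erase_subset_erase _ (Finset.filter_subset _ _))
      (fun c hc => (Finset.mem_filter.mp (Finset.mem_of_mem_erase hc)).2) m (by omega)
    exact ⟨ψ, hψ₀, hψ⟩
  · obtain ⟨f, hf, hfc₁⟩ :=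
      Submodule.exists_le_ker_of_notMem (A.notMem_span_singleton hc₁A h₀.1 hne)
    have hfc₁ : f c₁ = 0 := hfc₁ (Submodule.mem_span_singleton_self c₁)
    refine ⟨((f c₀)⁻¹ • f).smulRight (linForm c₀ ^ (m c₀ - 1)), by simp [hf], fun c hc => ?_⟩
    have hc₀mem : c₀ ∈ locHyps A U := Finset.mem_filter.mpr ⟨h₀.1, hc₀U⟩
    have hcard' : ((locHyps A U).erase c₀).card ≤ 1 := by
      rw [Finset.card_erase_of_mem hc₀mem]
      omega
    have hc₁T : c₁ ∈ (locHyps A U).erase c₀ :=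
      Finset.mem_erase.mpr ⟨hne, Finset.mem_filter.mpr ⟨hc₁A, hc₁U⟩⟩
    simp [Finset.card_le_one.mp hcard' c hc c₁ hc₁T, hfc₁]

lemma IsLocallyHeavy.definingPoly_mem_residueIdeal {c₁ : Fin ℓ → K} (h₀ : IsLocallyHeavy A m c₀)
    (hc₁ : c₁ ∈ A.hyps.erase c₀) :
    definingPoly (A.hyps.filter (· ∉ Submodule.span K {c₀, c₁})) m ∈ residueIdeal A m c₀ := by
  obtain ⟨ψ, hψ₀, hψ⟩ := h₀.exists_derivation_at_flat hc₁
  refine ⟨definingPoly (A.hyps.filter (· ∉ Submodule.span K {c₀, c₁})) m • derOf ψ,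
    (isLogDer_sub_single_iff h₀.1).mpr ⟨?_, fun c hc => ?_⟩, ?_⟩
  all_goals simp only [Derivation.smul_apply, derOf_linForm, smul_eq_mul, hψ₀]
  · exact dvd_mul_left _ _
  · obtain ⟨hne, hcA⟩ := Finset.mem_erase.mp hc
    by_cases hcU : c ∈ Submodule.span K {c₀, c₁}
    · exact (hψ c (Finset.mem_erase.mpr ⟨hne, Finset.mem_filter.mpr ⟨hcA, hcU⟩⟩)).mul_left _
    · exact (linForm_pow_dvd_definingPoly (Finset.mem_filter.mpr ⟨hcA, hcU⟩) m).mul_right _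
  · simp

lemma IsLocallyHeavy.definingPoly_filter_mem_residueIdeal (h₀ : IsLocallyHeavy A m c₀)
    (hm : 0 < m c₀) {ι : Type*} [Finite ι] (b : Module.Basis ι (S K ℓ) (logDer A m))
    {F : Finset (Fin ℓ → K)} (hF : F.Nonempty) (hFA : F ⊆ A.hyps.erase c₀) :
    definingPoly (A.hyps.filter fun c => ∀ c₁ ∈ F, c ∉ Submodule.span K {c₀, c₁}) m ∈
      residueIdeal A m c₀ := by
  induction hF using Finset.Nonempty.cons_induction with
  | singleton c₁ =>
    simpa using h₀.definingPoly_mem_residueIdeal (hFA (Finset.mem_singleton_self c₁))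
  | cons c₁ F _ _ ih =>
    obtain ⟨hc₁A, hFA⟩ := Finset.cons_subset.mp hFA
    simp only [Finset.forall_mem_cons, Finset.filter_and]
    refine definingPoly_inter_mem_residueIdeal h₀.1 hm b (fun c hc hcc₀ => ?_)
      (fun c hc c' hc' hc'c => ?_) (h₀.definingPoly_mem_residueIdeal hc₁A) (ih hFA)
    · exact (Finset.mem_filter.mp hc).2 (Submodule.span_mono (Set.singleton_subset_iff.mpr
        (Set.mem_insert c₀ {c₁})) hcc₀)
    · obtain ⟨hcT, hcT'⟩ := Finset.mem_sdiff.mp hc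
      have hc'T := (Finset.mem_filter.mp (Finset.mem_sdiff.mp hc').1).2
      obtain ⟨c₂, hc₂F, hcc₂⟩ : ∃ c₂ ∈ F, c ∈ Submodule.span K {c₀, c₂} := by
        simpa [Finset.filter_subset _ _ hcT] using hcT'
      have hc₀ : c₀ ∈ Submodule.span K {c₀, c₂} := Submodule.mem_span_of_mem (.inl rfl)
      exact hc'T c₂ hc₂F (Submodule.span_le.mpr (Set.pair_subset hc₀ hcc₂) hc'c)

lemma IsLocallyHeavy.one_mem_residueIdeal (h₀ : IsLocallyHeavy A m c₀)
    (hm : 0 < m c₀) {ι : Type*} [Finite ι] (b : Module.Basis ι (S K ℓ) (logDer A m))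
    (hA : (A.hyps.erase c₀).Nonempty) : 1 ∈ residueIdeal A m c₀ := by
  have hmem := h₀.definingPoly_filter_mem_residueIdeal hm b hA subset_rfl
  rwa [Finset.filter_eq_empty_iff.mpr, definingPoly, Finset.prod_empty] at hmem
  intro c hcA hc
  rcases eq_or_ne c c₀ with rfl | hne
  · obtain ⟨c₁, hc₁⟩ := hA
    exact hc c₁ hc₁ (Submodule.mem_span_of_mem (.inl rfl))
  · exact hc c (Finset.mem_erase.mpr ⟨hne, hcA⟩) (Submodule.mem_span_of_mem (.inr rfl))

lemma IsLocallyHeavy.exists_derivation_of_isFree (h₀ : IsLocallyHeavy A m c₀) (hm : 0 < m c₀)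
    (hfree : IsFree A m) (hA : (A.hyps.erase c₀).Nonempty) :
    ∃ θ : Der K ℓ, IsHomogOfDeg θ (m c₀ - 1) ∧ θ (linForm c₀) = linForm c₀ ^ (m c₀ - 1) ∧
      ∀ c ∈ A.hyps.erase c₀, linForm c ^ m c ∣ θ (linForm c) := by
  obtain ⟨_, _, _, hbasis⟩ := hfree
  obtain ⟨b⟩ := hbasis.nonempty_basis
  obtain ⟨η, hη, hη₀⟩ := h₀.one_mem_residueIdeal hm b hA
  let φ : (Fin ℓ → K) →ₗ[K] S K ℓ :=
    homogeneousComponent (m c₀ - 1) ∘ₗ (η : S K ℓ →ₗ[K] S K ℓ) ∘ₗ linFormHom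
  have hφ (c : Fin ℓ → K) : derOf φ (linForm c) = homogeneousComponent (m c₀ - 1) (η (linForm c)) :=
    derOf_linForm φ c
  refine ⟨derOf φ, fun c => hφ c ▸ homogeneousComponent_isHomogeneous _ _, ?_, fun c hc => ?_⟩
  · rw [hφ, ← sub_eq_zero]
    have hpow := isHomogeneous_linForm_pow c₀ (m c₀ - 1)
    have hdvd := linForm_pow_dvd_homogeneousComponent hη₀ (m c₀ - 1)
    rw [one_mul, map_sub, homogeneousComponent_of_mem hpow, if_pos rfl] at hdvd
    exact eq_zero_of_linForm_pow_dvd (A.ne_zero c₀ h₀.1) hdvd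
      ((homogeneousComponent_isHomogeneous _ _).sub hpow) (by omega)
  · rw [hφ]
    exact linForm_pow_dvd_homogeneousComponent (((isLogDer_sub_single_iff h₀.1).mp hη).2 c hc) _

end Residues

section TwoHeavyHyperplanes

lemma mem_span_or_mem_span_of_forall_or {V : Type*} [AddCommGroup V] [Module K V] {X : Set V}
    {a b x : V} (hx : x ∈ X) (hb : ∀ y ∈ X, y ∉ Submodule.span K {b})
    (hX : ∀ y ∈ X, ∀ z ∈ X, z ∈ Submodule.span K {y, a} ∨ z ∈ Submodule.span K {y, b}) :
    (∀ y ∈ X, y ∈ Submodule.span K {x, a}) ∨ ∀ y ∈ X, y ∈ Submodule.span K {x, b} := by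
  by_contra! ⟨⟨y, hy, hya⟩, z, hz, hzb⟩
  have hle {u v : V} (h : u ∈ Submodule.span K {x, v}) :
      Submodule.span K {u, v} ≤ Submodule.span K {x, v} :=
    Submodule.span_le.mpr (Set.pair_subset h (Submodule.mem_span_of_mem (.inr rfl)))
  have hza : z ∈ Submodule.span K {x, a} := (hX x hx z hz).resolve_right hzb
  have hyb : y ∈ Submodule.span K {x, b} := (hX x hx y hy).resolve_left hya
  rcases hX z hz y hy with h | h
  · exact hya (hle hza h)
  · exact hzb (hle hyb (mem_span_insert_exchange h (hb y hy)))

lemma mem_span_of_linForm_pow_mem {s : Set (Fin ℓ → K)} {c : Fin ℓ → K} {n : ℕ}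
    (h : linForm c ^ n ∈ Ideal.span (linForm '' s)) : c ∈ Submodule.span K s := by
  by_contra hc
  obtain ⟨f, hfc, hfs⟩ := Submodule.exists_le_ker_of_notMem hc
  suffices hle : Ideal.span (linForm '' s) ≤ RingHom.ker (aeval fun i => f (Pi.single i 1)) by
    have h0 := RingHom.mem_ker.mp (hle h)
    rw [map_pow, aeval_linForm] at h0
    exact hfc (eq_zero_of_pow_eq_zero h0)
  rw [Ideal.span_le, Set.image_subset_iff]
  exact fun a ha => (aeval_linForm f a).trans (hfs (Submodule.subset_span ha))

lemma derivation_linForm_mem_span {η : Der K ℓ} {s : Set (Fin ℓ → K)}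
    (hη : ∀ c ∈ s, linForm c ∣ η (linForm c)) {c : Fin ℓ → K} (hc : c ∈ Submodule.span K s) :
    η (linForm c) ∈ Ideal.span (linForm '' s) := by
  suffices hle : Submodule.span K s ≤ ((Ideal.span (linForm '' s)).restrictScalars K).comap
      ((η : S K ℓ →ₗ[K] S K ℓ) ∘ₗ linFormHom) from hle hc
  exact Submodule.span_le.mpr fun a ha =>
    Ideal.mem_of_dvd _ (hη a ha) (Ideal.subset_span (Set.mem_image_of_mem _ ha))

lemma exists_ne_zero_mem_span_pair_of_mem_span_pair {a b c d : Fin 3 → K} (ha : a ≠ 0)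
    (hb : b ∉ Submodule.span K {a}) (hc : c ≠ 0) (hd : d ∉ Submodule.span K {c}) :
    ∃ w ≠ 0, w ∈ Submodule.span K {a, b} ∧ w ∈ Submodule.span K {c, d} := by
  by_contra! h
  have hdisj : Disjoint (Submodule.span K {a, b}) (Submodule.span K {c, d}) :=
    Submodule.disjoint_def.mpr fun w hw hw' => not_imp_not.mp (fun hw0 => h w hw0 hw) hw'
  have := Submodule.finrank_add_finrank_le_of_disjoint hdisj
  rw [finrank_span_pair ha hb, finrank_span_pair hc hd, Module.finrank_fin_fun] at this
  omega

lemma mem_span_pair_or_mem_span_pair_of_derivation {η : Der K 3} {cH cL c c' : Fin 3 → K} {n : ℕ}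
    (hηH : η (linForm cH) = 0) (hηL : η (linForm cL) = linForm cL ^ n) (hH : cH ≠ 0)
    (hHL : cL ∉ Submodule.span K {cH}) (hη : linForm c ∣ η (linForm c))
    (hη' : linForm c' ∣ η (linForm c')) (hc : c ≠ 0) (hcc' : c' ∉ Submodule.span K {c}) :
    cH ∈ Submodule.span K {c, c'} ∨ cL ∈ Submodule.span K {c, c'} := by
  obtain ⟨w, hw0, hw, hw'⟩ := exists_ne_zero_mem_span_pair_of_mem_span_pair hH hHL hc hcc'
  obtain ⟨x, y, rfl⟩ := Submodule.mem_span_pair.mp hw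
  rcases eq_or_ne y 0 with rfl | hy
  · have hx : x ≠ 0 := by
      rintro rfl
      simp at hw0
    rw [zero_smul, add_zero] at hw'
    exact .inl ((Submodule.smul_mem_iff _ hx).mp hw')
  · right
    have hmem := derivation_linForm_mem_span (η := η) (s := {c, c'}) (by simp [hη, hη']) hw'
    have hval : η (linForm (x • cH + y • cL)) = y • linForm cL ^ n := by
      rw [linForm_add, linForm_smul, linForm_smul]
      simp [hηH, hηL]
    rw [hval, smul_eq_C_mul] at hmem
    exact mem_span_of_linForm_pow_mem
      ((Ideal.unit_mul_mem_iff_mem _ ((isUnit_iff_ne_zero.mpr hy).map C)).mp hmem)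

variable {A : Arrangement K ℓ} {m : (Fin ℓ → K) → ℕ} {cH cL c₀ : Fin ℓ → K}

lemma IsLocallyHeavy.add_le (h₀ : IsLocallyHeavy A m c₀) {a b : Fin ℓ → K}
    (ha : a ∈ A.hyps.erase c₀) (hb : b ∈ A.hyps.erase c₀) (hab : a ≠ b)
    (hbU : b ∈ Submodule.span K {c₀, a}) : m a + m b ≤ m c₀ := by
  obtain ⟨hane, haA⟩ := Finset.mem_erase.mp ha
  obtain ⟨hbne, hbA⟩ := Finset.mem_erase.mp hb
  have hc₀U : c₀ ∈ Submodule.span K {c₀, a} := Submodule.mem_span_of_mem (.inl rfl)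
  have haU : a ∈ Submodule.span K {c₀, a} := Submodule.mem_span_of_mem (.inr rfl)
  have hsub : {c₀, a, b} ⊆ locHyps A (Submodule.span K {c₀, a}) := by
    simp [Finset.insert_subset_iff, locHyps, h₀.1, haA, hbA, hc₀U, haU, hbU]
  have hcard : 3 ≤ (locHyps A (Submodule.span K {c₀, a})).card := by
    rw [← Finset.card_eq_three.mpr ⟨c₀, a, b, hane.symm, hbne.symm, hab, rfl⟩]
    exact Finset.card_le_card hsub
  rw [← Finset.sum_pair hab]
  refine (Finset.sum_le_sum_of_subset ?_).trans
    (h₀.2 _ (isFlatOfRank_span_pair h₀.1 haA hane.symm) hc₀U hcard)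
  exact Finset.subset_erase.mpr
    ⟨(Finset.subset_insert _ _).trans hsub, by simp [hane.symm, hbne.symm]⟩

lemma IsLocallyHeavy.notMem_span_pair (hm : ∀ c ∈ A.hyps, 0 < m c) (hH : IsLocallyHeavy A m cH)
    (hL : IsLocallyHeavy A m cL) (hne : cH ≠ cL) {c : Fin ℓ → K} (hc : c ∈ A.hyps) (hcH : c ≠ cH)
    (hcL : c ≠ cL) : c ∉ Submodule.span K {cH, cL} := by
  intro hmem
  have h₁ := hH.add_le (Finset.mem_erase.mpr ⟨hne.symm, hL.1⟩) (Finset.mem_erase.mpr ⟨hcH, hc⟩)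
    hcL.symm hmem
  have h₂ := hL.add_le (Finset.mem_erase.mpr ⟨hne, hH.1⟩) (Finset.mem_erase.mpr ⟨hcL, hc⟩)
    hcH.symm (Set.pair_comm cH cL ▸ hmem)
  have := hm c hc
  omega

lemma reducible_of_forall_mem_or_eq {W : Submodule K (Fin ℓ → K)} {c : Fin ℓ → K} (hW : W ≠ ⊥)
    (hc : c ∉ W) (h : ∀ a ∈ A.hyps, a ∈ W ∨ a = c) : Reducible A := by
  have hc0 : c ≠ 0 := fun h0 => hc (h0 ▸ W.zero_mem)
  obtain ⟨W', hWW', hcompl⟩ :=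
    ((Submodule.disjoint_span_singleton' hc0).mpr hc).exists_isCompl
  refine ⟨W', Submodule.span K {c}, ne_bot_of_le_ne_bot hW hWW',
    Submodule.span_singleton_eq_bot.not.mpr hc0, hcompl.inf_eq_bot, hcompl.sup_eq_top,
    fun a ha => (h a ha).imp (@hWW' a) ?_⟩
  rintro rfl
  exact Submodule.mem_span_singleton_self a

lemma IsLocallyHeavy.reducible_of_forall_mem_span_pair (hm : ∀ c ∈ A.hyps, 0 < m c)
    (hH : IsLocallyHeavy A m cH) (hL : IsLocallyHeavy A m cL) (hne : cH ≠ cL) {c : Fin ℓ → K}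
    (hc : c ∈ A.hyps) (hcH : c ≠ cH) (hcL : c ≠ cL)
    (h : ∀ a ∈ A.hyps, a ≠ cH → a ≠ cL → a ∈ Submodule.span K {c, cH}) : Reducible A := by
  refine reducible_of_forall_mem_or_eq (W := Submodule.span K {c, cH}) (c := cL) ?_ ?_ ?_
  · exact Submodule.ne_bot_iff _ |>.mpr ⟨c, Submodule.mem_span_of_mem (.inl rfl), A.ne_zero c hc⟩
  · intro hmem
    refine hH.notMem_span_pair hm hL hne hc hcH hcL (Set.pair_comm cL cH ▸ ?_)
    exact mem_span_insert_exchange hmem (A.notMem_span_singleton hH.1 hL.1 hne)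
  · intro a ha
    rcases eq_or_ne a cL with rfl | haL
    · exact .inr rfl
    rcases eq_or_ne a cH with rfl | haH
    · exact .inl (Submodule.mem_span_of_mem (.inr rfl))
    · exact .inl (h a ha haH haL)

lemma IsLocallyHeavy.exists_derivation_of_isFree_of_le (hm : ∀ c ∈ A.hyps, 0 < m c)
    (hH : IsLocallyHeavy A m cH) (hL : IsLocallyHeavy A m cL) (hne : cH ≠ cL) (hle : m cL ≤ m cH)
    (hfree : IsFree A m) :
    ∃ η : Der K ℓ, η (linForm cH) = 0 ∧ η (linForm cL) = linForm cL ^ (m cL - 1) ∧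
      ∀ c ∈ A.hyps.erase cL, linForm c ∣ η (linForm c) := by
  have hmL := hm cL hL.1
  have hHmem : cH ∈ A.hyps.erase cL := Finset.mem_erase.mpr ⟨hne, hH.1⟩
  obtain ⟨η, hdeg, hηL, hη⟩ := hL.exists_derivation_of_isFree hmL hfree ⟨cH, hHmem⟩
  refine ⟨η, ?_, hηL, fun c hc => ?_⟩
  · exact eq_zero_of_linForm_pow_dvd (A.ne_zero cH hH.1) (hη cH hHmem) (hdeg cH) (by omega)
  · exact (dvd_pow_self _ (hm c (Finset.mem_of_mem_erase hc)).ne').trans (hη c hc)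

lemma IsLocallyHeavy.reducible_of_isFree_of_le {A : Arrangement K 3} {m : (Fin 3 → K) → ℕ}
    {cH cL : Fin 3 → K} (hm : ∀ c ∈ A.hyps, 0 < m c) (hH : IsLocallyHeavy A m cH)
    (hL : IsLocallyHeavy A m cL) (hne : cH ≠ cL) (hle : m cL ≤ m cH) (hfree : IsFree A m) :
    Reducible A := by
  obtain ⟨η, hηH, hηL, hη⟩ := hH.exists_derivation_of_isFree_of_le hm hL hne hle hfree
  by_cases hothers : ∃ c ∈ A.hyps, c ≠ cH ∧ c ≠ cL
  · obtain ⟨c, hc, hcH, hcL⟩ := hothers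
    let X : Set (Fin 3 → K) := {a | a ∈ A.hyps ∧ a ≠ cH ∧ a ≠ cL}
    have hX : ∀ a ∈ X, ∀ b ∈ X, b ∈ Submodule.span K {a, cH} ∨ b ∈ Submodule.span K {a, cL} := by
      intro a ⟨haA, haH, haL⟩ b ⟨hbA, hbH, hbL⟩
      rcases eq_or_ne a b with rfl | hab
      · exact .inl (Submodule.mem_span_of_mem (.inl rfl))
      have h := mem_span_pair_or_mem_span_pair_of_derivation hηH hηL (A.ne_zero cH hH.1)
        (A.notMem_span_singleton hH.1 hL.1 hne) (hη a (Finset.mem_erase.mpr ⟨haL, haA⟩))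
        (hη b (Finset.mem_erase.mpr ⟨hbL, hbA⟩)) (A.ne_zero a haA)
        (A.notMem_span_singleton haA hbA hab)
      simp only [Set.pair_comm a] at h ⊢
      exact h.imp (mem_span_insert_exchange · (A.notMem_span_singleton haA hH.1 haH))
        (mem_span_insert_exchange · (A.notMem_span_singleton haA hL.1 haL))
    rcases mem_span_or_mem_span_of_forall_or (X := X) (x := c) ⟨hc, hcH, hcL⟩
      (fun a ha => A.notMem_span_singleton hL.1 ha.1 ha.2.2.symm) hX with h | h
    · exact hH.reducible_of_forall_mem_span_pair hm hL hne hc hcH hcL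
        fun a ha haH haL => h a ⟨ha, haH, haL⟩
    · exact hL.reducible_of_forall_mem_span_pair hm hH hne.symm hc hcL hcH
        fun a ha haL haH => h a ⟨ha, haH, haL⟩
  · push Not at hothers
    refine reducible_of_forall_mem_or_eq (W := Submodule.span K {cH})
      (Submodule.span_singleton_eq_bot.not.mpr (A.ne_zero cH hH.1))
      (A.notMem_span_singleton hH.1 hL.1 hne) fun a ha => or_iff_not_imp_left.mpr fun haH => ?_
    exact hothers a ha fun h => haH (h ▸ Submodule.mem_span_singleton_self a)

lemma IsLocallyHeavy.reducible_of_isFree {A : Arrangement K 3} {m : (Fin 3 → K) → ℕ}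
    {cH cL : Fin 3 → K} (hm : ∀ c ∈ A.hyps, 0 < m c) (hH : IsLocallyHeavy A m cH)
    (hL : IsLocallyHeavy A m cL) (hne : cH ≠ cL) (hfree : IsFree A m) : Reducible A := by
  rcases le_total (m cL) (m cH) with hle | hle
  · exact hH.reducible_of_isFree_of_le hm hL hne hle hfree
  · exact hL.reducible_of_isFree_of_le hm hH hne.symm hle hfree

end TwoHeavyHyperplanes

section SaitoCriterion

lemma dvd_det_mul_of_dvd_mulVec {n R : Type*} [Fintype n] [DecidableEq n] [CommRing R]
    {M : Matrix n n R} {v : n → R} {p : R} (h : ∀ i, p ∣ M.mulVec v i) (j : n) :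
    p ∣ M.det * v j := by
  have hadj : M.adjugate.mulVec (M.mulVec v) = M.det • v := by
    rw [Matrix.mulVec_mulVec, Matrix.adjugate_mul, Matrix.smul_mulVec, Matrix.one_mulVec]
  rw [← smul_eq_mul, ← Pi.smul_apply, ← hadj]
  exact Finset.dvd_sum fun i _ => (h i).mul_left _

lemma existsUnique_vecMul_eq_of_det_dvd {n R : Type*} [Fintype n] [DecidableEq n] [CommRing R]
    [IsDomain R] {M : Matrix n n R} {v : n → R} (hM : M.det ≠ 0)
    (h : ∀ i, M.det ∣ (M.updateRow i v).det) : ∃! f, Matrix.vecMul f M = v := by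
  choose f hf using h
  have hcramer : M.transpose.cramer v = M.det • f :=
    funext fun i => (Matrix.cramer_transpose_apply M v i).trans (hf i)
  have hmul := Matrix.mulVec_cramer M.transpose v
  rw [hcramer, Matrix.mulVec_smul, Matrix.mulVec_transpose, Matrix.det_transpose] at hmul
  refine ⟨f, smul_right_injective _ hM hmul, fun f' hf' => ?_⟩
  refine sub_eq_zero.mp (Matrix.eq_zero_of_vecMul_eq_zero hM ?_)
  rw [Matrix.sub_vecMul, hf', smul_right_injective _ hM hmul, sub_self]

/-- The matrix of coefficients of a family of derivations, whose determinant enters Saito's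
criterion. -/
noncomputable def saitoMatrix (θ : Fin ℓ → Der K ℓ) : Matrix (Fin ℓ) (Fin ℓ) (S K ℓ) :=
  Matrix.of fun i j => θ i (X j)

/-- Saito's criterion for `θ` to be a basis of `D(A, m)`: the `θ i` are logarithmic and the
determinant of their coefficient matrix is the defining polynomial up to a unit. -/
def IsSaitoBasis (A : Arrangement K ℓ) (m : (Fin ℓ → K) → ℕ) (θ : Fin ℓ → Der K ℓ) : Prop :=
  (∀ i, IsLogDer A m (θ i)) ∧ Associated (saitoMatrix θ).det (definingPoly A.hyps m)

lemma saitoMatrix_update (θ : Fin ℓ → Der K ℓ) (i : Fin ℓ) (η : Der K ℓ) :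
    saitoMatrix (Function.update θ i η) = (saitoMatrix θ).updateRow i fun j => η (X j) := by
  ext1 k j
  rcases eq_or_ne k i with rfl | hk
  · simp [saitoMatrix]
  · simp [saitoMatrix, hk]

lemma saitoMatrix_mulVec (θ : Fin ℓ → Der K ℓ) (c : Fin ℓ → K) (i : Fin ℓ) :
    (saitoMatrix θ).mulVec (fun j => C (c j)) i = θ i (linForm c) := by
  simp_rw [linForm, ← smul_eq_C_mul, map_sum, Derivation.map_smul, Matrix.mulVec, dotProduct,
    saitoMatrix, Matrix.of_apply, smul_eq_C_mul, mul_comm]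

variable {A : Arrangement K ℓ} {m : (Fin ℓ → K) → ℕ} {θ : Fin ℓ → Der K ℓ}

lemma forall_isLogDer_update_iff {i : Fin ℓ} {η : Der K ℓ} :
    (∀ k, IsLogDer A m (Function.update θ i η k)) ↔
      IsLogDer A m η ∧ ∀ j ≠ i, IsLogDer A m (θ j) :=
  Function.forall_update_iff θ fun _ η => IsLogDer A m η

lemma definingPoly_ne_zero : definingPoly A.hyps m ≠ 0 :=
  Finset.prod_ne_zero_iff.mpr fun c hc => pow_ne_zero _ (linForm_ne_zero (A.ne_zero c hc))

lemma definingPoly_dvd_det_saitoMatrix (hθ : ∀ i, IsLogDer A m (θ i)) :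
    definingPoly A.hyps m ∣ (saitoMatrix θ).det := by
  refine Finset.prod_dvd_of_isRelPrime (fun c hc c' hc' hne => ?_) fun c hc => ?_
  · exact (isRelPrime_linForm (A.ne_zero c hc) (A.notMem_span_singleton hc hc' hne)).pow
  · obtain ⟨j, hj⟩ := Function.ne_iff.mp (A.ne_zero c hc)
    have hunit : IsUnit (C (c j) : S K ℓ) := (isUnit_iff_ne_zero.mpr hj).map C
    exact hunit.dvd_mul_right.mp (dvd_det_mul_of_dvd_mulVec (v := fun j => C (c j))
      (fun i => saitoMatrix_mulVec θ c i ▸ hθ i c hc) j)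

lemma IsSaitoBasis.isDerBasis (h : IsSaitoBasis A m θ) : IsDerBasis A m θ := by
  refine ⟨h.1, fun η hη => ?_⟩
  have hcoeff (f : Fin ℓ → S K ℓ) :
      η = ∑ i, f i • θ i ↔ Matrix.vecMul f (saitoMatrix θ) = fun j => η (X j) := by
    have happly (j : Fin ℓ) :
        Matrix.vecMul f (saitoMatrix θ) j = (∑ i, f i • θ i : Der K ℓ) (X j) := by
      have hsum := map_sum (Derivation.coeFnAddMonoidHom (R := K) (A := S K ℓ) (M := S K ℓ))
        (fun i => f i • θ i) Finset.univ
      exact ((congrFun hsum (X j)).trans (Finset.sum_apply _ _ _)).symm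
    exact ⟨fun h => funext fun j => h ▸ happly j,
      fun h => derivation_ext fun j => (congrFun h j).symm.trans (happly j)⟩
  simp only [hcoeff]
  refine existsUnique_vecMul_eq_of_det_dvd (h.2.ne_zero_iff.mpr definingPoly_ne_zero) fun i => ?_
  rw [← saitoMatrix_update]
  exact h.2.dvd.trans (definingPoly_dvd_det_saitoMatrix
    (forall_isLogDer_update_iff.mpr ⟨hη, fun j _ => h.1 j⟩))

lemma IsSaitoBasis.update_sub_smul (h : IsSaitoBasis A m θ) {i j : Fin ℓ} (hij : i ≠ j)
    (a : S K ℓ) : IsSaitoBasis A m (Function.update θ j (θ j - a • θ i)) := by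
  refine ⟨forall_isLogDer_update_iff.mpr
    ⟨(logDer A m).sub_mem (h.1 j) ((logDer A m).smul_mem a (h.1 i)), fun k _ => h.1 k⟩, ?_⟩
  have hrow : (fun k => (θ j - a • θ i) (X k)) = saitoMatrix θ j + (-a) • saitoMatrix θ i := by
    ext1 k
    simp [saitoMatrix, sub_eq_add_neg]
  rw [saitoMatrix_update, hrow, Matrix.det_updateRow_add_smul_self _ hij.symm]
  exact h.2

lemma definingPoly_add_single {T : Finset (Fin ℓ → K)} {c : Fin ℓ → K} (hc : c ∈ T)
    (m : (Fin ℓ → K) → ℕ) : definingPoly T (m + Pi.single c 1) = linForm c * definingPoly T m := by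
  rw [definingPoly, definingPoly, ← Finset.mul_prod_erase T _ hc, ← Finset.mul_prod_erase T _ hc,
    ← mul_assoc, Pi.add_apply, Pi.single_eq_same, pow_succ']
  refine congrArg _ (Finset.prod_congr rfl fun a ha => ?_)
  rw [Pi.add_apply, Pi.single_eq_of_ne (Finset.ne_of_mem_erase ha), add_zero]

lemma IsLogDer.add_single {η : Der K ℓ} {c : Fin ℓ → K} (hη : IsLogDer A m η) (hc : c ∈ A.hyps)
    (hηc : linForm c ^ (m c + 1) ∣ η (linForm c)) : IsLogDer A (m + Pi.single c 1) η := by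
  refine (isLogDer_iff hc).mpr ⟨?_, fun a ha => ?_⟩
  · rwa [Pi.add_apply, Pi.single_eq_same]
  · rw [Pi.add_apply, Pi.single_eq_of_ne (Finset.ne_of_mem_erase ha), add_zero]
    exact hη a (Finset.mem_of_mem_erase ha)

lemma IsSaitoBasis.update_linForm_smul (h : IsSaitoBasis A m θ) {c : Fin ℓ → K} (hc : c ∈ A.hyps)
    {i : Fin ℓ} (hi : ∀ j ≠ i, linForm c ^ (m c + 1) ∣ θ j (linForm c)) :
    IsSaitoBasis A (m + Pi.single c 1) (Function.update θ i (linForm c • θ i)) := by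
  have hθi : IsLogDer A (m + Pi.single c 1) (linForm c • θ i) := by
    refine IsLogDer.add_single ((logDer A m).smul_mem _ (h.1 i)) hc ?_
    rw [pow_succ', Derivation.smul_apply, smul_eq_mul]
    exact mul_dvd_mul_left _ (h.1 i c hc)
  have hrow : (fun k => (linForm c • θ i) (X k)) = linForm c • saitoMatrix θ i := by
    ext1 k
    rw [Derivation.smul_apply, Pi.smul_apply, saitoMatrix, Matrix.of_apply]
  refine ⟨forall_isLogDer_update_iff.mpr
    ⟨hθi, fun j hj => (h.1 j).add_single hc (hi j hj)⟩, ?_⟩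
  rw [saitoMatrix_update, hrow, Matrix.det_updateRow_smul, Matrix.updateRow_eq_self,
    definingPoly_add_single hc]
  exact h.2.mul_left _

end SaitoCriterion

section Products

/-- The derivation `θ` comes from the factor of a product of arrangements whose covectors are those
in `W`: it is homogeneous of degree `d`, involves only the variables of that factor, and vanishes on
the covectors `W'` of the other factor. -/
def IsFactorDer (W W' : Submodule K (Fin ℓ → K)) (d : ℕ) (θ : Der K ℓ) : Prop :=
  (∀ c ∈ W, θ (linForm c) ∈ formsOn W d) ∧ ∀ c ∈ W', θ (linForm c) = 0

lemma IsFactorDer.isHomogOfDeg {W W' : Submodule K (Fin ℓ → K)} {d : ℕ} {θ : Der K ℓ}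
    (h : IsFactorDer W W' d θ) (hW : W ⊔ W' = ⊤) : IsHomogOfDeg θ d := by
  intro c
  obtain ⟨a, ha, b, hb, rfl⟩ := Submodule.mem_sup.mp (hW ▸ Submodule.mem_top : c ∈ W ⊔ W')
  rw [linForm_add, map_add, h.2 b hb, add_zero]
  exact isHomogeneous_of_mem_formsOn (h.1 a ha)

lemma IsFactorDer.smul {W W' : Submodule K (Fin ℓ → K)} {d e : ℕ} {θ : Der K ℓ} {a : S K ℓ}
    (h : IsFactorDer W W' d θ) (ha : a ∈ formsOn W e) : IsFactorDer W W' (e + d) (a • θ) :=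
  ⟨fun c hc => mul_mem_formsOn ha (h.1 c hc), fun c hc => by
    rw [Derivation.smul_apply, h.2 c hc, smul_zero]⟩

lemma IsFactorDer.sub {W W' : Submodule K (Fin ℓ → K)} {d : ℕ} {θ η : Der K ℓ}
    (hθ : IsFactorDer W W' d θ) (hη : IsFactorDer W W' d η) : IsFactorDer W W' d (θ - η) :=
  ⟨fun c hc => sub_mem (hθ.1 c hc) (hη.1 c hc), fun c hc => by
    rw [Derivation.sub_apply, hθ.2 c hc, hη.2 c hc, sub_zero]⟩

/-- `D(A, m)` has a basis satisfying Saito's criterion whose `k`-th member comes from the factor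
with covectors in `W k`, the other factors having their covectors in `W' k`. -/
def HasFactorBasis (A : Arrangement K ℓ) (m : (Fin ℓ → K) → ℕ)
    (W W' : Fin ℓ → Submodule K (Fin ℓ → K)) : Prop :=
  ∃ θ : Fin ℓ → Der K ℓ, IsSaitoBasis A m θ ∧ ∀ k, ∃ d, IsFactorDer (W k) (W' k) d (θ k)

variable {A : Arrangement K ℓ} {m : (Fin ℓ → K) → ℕ} {W W' : Fin ℓ → Submodule K (Fin ℓ → K)}
  {θ : Fin ℓ → Der K ℓ} {c : Fin ℓ → K} {i j : Fin ℓ}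

lemma HasFactorBasis.isFree (h : HasFactorBasis A m W W') (hW : ∀ k, W k ⊔ W' k = ⊤) :
    IsFree A m := by
  obtain ⟨θ, hsaito, hθ⟩ := h
  choose d hd using hθ
  exact ⟨d, θ, fun k => (hd k).isHomogOfDeg (hW k), hsaito.isDerBasis⟩

lemma hasFactorBasis_of_forall_eq_zero (b : Module.Basis (Fin ℓ) K (Fin ℓ → K))
    (hb : ∀ k, ∀ c ∈ W' k, b.coord k c = 0) (hm : ∀ c ∈ A.hyps, m c = 0) :
    HasFactorBasis A m W W' := by
  let θ (k : Fin ℓ) : Der K ℓ := derOf (Algebra.linearMap K (S K ℓ) ∘ₗ b.coord k)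
  have hθ (k : Fin ℓ) (c : Fin ℓ → K) : θ k (linForm c) = C (b.coord k c) := derOf_linForm _ c
  have hmatrix : saitoMatrix θ = C.mapMatrix (b.toMatrix (Pi.basisFun K (Fin ℓ))) := by
    ext1 k j
    rw [saitoMatrix, Matrix.of_apply, ← linForm_single, hθ]
    simp [Module.Basis.toMatrix_apply]
  refine ⟨θ, ⟨fun k c hc => by simp [hm c hc], ?_⟩, fun k => ⟨0, fun c _ => ?_, fun c hc => ?_⟩⟩
  · have hdet : IsUnit (b.toMatrix (Pi.basisFun K (Fin ℓ))).det := by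
      rw [← Module.Basis.det_apply]
      exact b.isUnit_det _
    rw [hmatrix, ← RingHom.map_det, definingPoly,
      Finset.prod_eq_one fun c hc => by rw [hm c hc, pow_zero]]
    exact associated_one_iff_isUnit.mpr (hdet.map C)
  · rw [hθ, formsOn, pow_zero]
    exact Submodule.algebraMap_mem _
  · rw [hθ, hb k c hc, C_0]

lemma IsSaitoBasis.hasFactorBasis_add_single (h : IsSaitoBasis A m θ)
    (hθ : ∀ k, ∃ d, IsFactorDer (W k) (W' k) d (θ k)) (hc : c ∈ A.hyps) (hcW : c ∈ W i)
    (hi : ∀ j ≠ i, linForm c ^ (m c + 1) ∣ θ j (linForm c)) :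
    HasFactorBasis A (m + Pi.single c 1) W W' := by
  refine ⟨_, h.update_linForm_smul hc hi,
    (Function.forall_update_iff θ fun k η => ∃ d, IsFactorDer (W k) (W' k) d η).mpr
      ⟨?_, fun j _ => hθ j⟩⟩
  obtain ⟨d, hd⟩ := hθ i
  have hlin : linForm c ∈ formsOn (W i) 1 := pow_one (linForm c) ▸ linForm_pow_mem_formsOn hcW 1
  exact ⟨1 + d, hd.smul hlin⟩

lemma HasFactorBasis.add_single (h : HasFactorBasis A m W W') (hc : c ∈ A.hyps) (hcW : c ∈ W i)
    (hcW' : ∀ j ≠ i, c ∈ W' j) : HasFactorBasis A (m + Pi.single c 1) W W' := by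
  obtain ⟨θ, hsaito, hθ⟩ := h
  refine hsaito.hasFactorBasis_add_single hθ hc hcW fun j hj => ?_
  obtain ⟨d, hd⟩ := hθ j
  exact hd.2 c (hcW' j hj) ▸ dvd_zero _

lemma HasFactorBasis.add_single_of_finrank_eq_two (h : HasFactorBasis A m W W') (hij : i ≠ j)
    (hW : W i = W j) (hW' : W' i = W' j) (hdim : Module.finrank K (W i) = 2) (hc : c ∈ A.hyps)
    (hcW : c ∈ W i) (hcW' : ∀ k, k ≠ i → k ≠ j → c ∈ W' k) :
    HasFactorBasis A (m + Pi.single c 1) W W' := by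
  obtain ⟨θ, hsaito, hθ⟩ := h
  obtain ⟨d, hi⟩ := hθ i
  obtain ⟨e, hj⟩ := hθ j
  wlog hde : d ≤ e generalizing i j d e
  · exact this hij.symm hW.symm hW'.symm (hW ▸ hdim) (hW ▸ hcW) (fun k hkj hki => hcW' k hki hkj)
      e hj d hi (le_of_not_ge hde)
  have hother (k : Fin ℓ) (hki : k ≠ i) (hkj : k ≠ j) : θ k (linForm c) = 0 := by
    obtain ⟨_, hk⟩ := hθ k
    exact hk.2 c (hcW' k hki hkj)
  rcases linForm_pow_succ_dvd_or_exists_dvd_sub_mul hdim hcW (A.ne_zero c hc) hde (hi.1 c hcW)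
    (hW ▸ hj.1 c (hW ▸ hcW)) (hsaito.1 i c hc) (hsaito.1 j c hc) with hdvd | ⟨a, ha, hdvd⟩
  · refine hsaito.hasFactorBasis_add_single hθ hc (hW ▸ hcW : c ∈ W j) fun k hkj => ?_
    rcases eq_or_ne k i with rfl | hki
    · exact hdvd
    · exact hother k hki hkj ▸ dvd_zero _
  · have hdiff : IsFactorDer (W j) (W' j) e (θ j - a • θ i) := by
      refine hj.sub ?_
      have hsmul := hi.smul ha
      rwa [Nat.sub_add_cancel hde, hW, hW'] at hsmul
    refine (hsaito.update_sub_smul hij a).hasFactorBasis_add_single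
      ((Function.forall_update_iff θ fun k η => ∃ d, IsFactorDer (W k) (W' k) d η).mpr
        ⟨⟨e, hdiff⟩, fun k _ => hθ k⟩) hc hcW fun k hki => ?_
    rcases eq_or_ne k j with rfl | hkj
    · rw [Function.update_self]
      exact hdvd
    · rw [Function.update_of_ne hkj, hother k hki hkj]
      exact dvd_zero _

lemma exists_basis_coord_eq_zero_of_isCompl {W W' : Submodule K (Fin 3 → K)} (h : IsCompl W W')
    (hW : Module.finrank K W = 2) (hW' : Module.finrank K W' = 1) :
    ∃ b : Module.Basis (Fin 3) K (Fin 3 → K), ∀ k, ∀ c ∈ ![W', W', W] k, b.coord k c = 0 := by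
  let b₁ := Module.finBasisOfFinrankEq K W hW
  let b₂ := Module.finBasisOfFinrankEq K W' hW'
  let e : Fin 2 ⊕ Fin 1 ≃ Fin 3 := finSumFinEquiv
  let b := ((b₁.prod b₂).map (Submodule.prodEquivOfIsCompl W W' h)).reindex e
  have hb (k : Fin 3) (c : Fin 3 → K) : b.coord k c =
      (b₁.prod b₂).repr ((Submodule.prodEquivOfIsCompl W W' h).symm c) (e.symm k) := by
    simp [b]
  have hleft (k : Fin 2) (c : Fin 3 → K) (hc : c ∈ W') : b.coord (e (.inl k)) c = 0 := by
    rw [hb, Submodule.prodEquivOfIsCompl_symm_apply_right W W' h ⟨c, hc⟩]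
    simp
  have hright (c : Fin 3 → K) (hc : c ∈ W) : b.coord (e (.inr 0)) c = 0 := by
    rw [hb, Submodule.prodEquivOfIsCompl_symm_apply_left W W' h ⟨c, hc⟩]
    simp
  exact ⟨b, Fin.forall_fin_succ.mpr ⟨hleft 0, Fin.forall_fin_two.mpr ⟨hleft 1, hright⟩⟩⟩

lemma isFree_of_isCompl {A : Arrangement K 3} (m : (Fin 3 → K) → ℕ)
    {W W' : Submodule K (Fin 3 → K)} (h : IsCompl W W') (hW : Module.finrank K W = 2)
    (hW' : Module.finrank K W' = 1) (hA : ∀ c ∈ A.hyps, c ∈ W ∨ c ∈ W') : IsFree A m := by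
  suffices hbasis : HasFactorBasis A m ![W, W, W'] ![W', W', W] by
    refine hbasis.isFree fun k => ?_
    fin_cases k
    exacts [h.sup_eq_top, h.sup_eq_top, h.symm.sup_eq_top]
  induction m using multiplicity_induction (T := A.hyps) with
  | zero m hm =>
    obtain ⟨b, hb⟩ := exists_basis_coord_eq_zero_of_isCompl h hW hW'
    exact hasFactorBasis_of_forall_eq_zero b hb hm
  | succ m c hc ih =>
    rcases hA c hc with hcW | hcW'
    · refine ih.add_single_of_finrank_eq_two (i := 0) (j := 1) (by decide) rfl rfl hW hc hcW
        fun k hk0 hk1 => ?_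
      fin_cases k
      exacts [absurd rfl hk0, absurd rfl hk1, hcW]
    · refine ih.add_single (i := 2) hc hcW' fun k hk => ?_
      fin_cases k
      exacts [hcW', hcW', absurd rfl hk]

lemma isFree_of_reducible {A : Arrangement K 3} (m : (Fin 3 → K) → ℕ) (h : Reducible A) :
    IsFree A m := by
  obtain ⟨W₁, W₂, hne₁, hne₂, hinf, hsup, hA⟩ := h
  have hcompl : IsCompl W₁ W₂ := IsCompl.of_eq hinf hsup
  have hdim := Submodule.finrank_add_eq_of_isCompl hcompl
  rw [Module.finrank_fin_fun] at hdim
  have hpos₁ := Submodule.one_le_finrank_iff.mpr hne₁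
  have hpos₂ := Submodule.one_le_finrank_iff.mpr hne₂
  rcases (by omega : Module.finrank K W₁ = 2 ∨ Module.finrank K W₂ = 2) with hdim₁ | hdim₂
  · exact isFree_of_isCompl m hcompl hdim₁ (by omega) hA
  · exact isFree_of_isCompl m hcompl.symm hdim₂ (by omega) fun c hc => (hA c hc).symm

end Products

theorem stmt13 (A : Arrangement K 3) (m : (Fin 3 → K) → ℕ)
    (hm : ∀ c ∈ A.hyps, 0 < m c) (cH cL : Fin 3 → K) (hne : cH ≠ cL)
    (hH : IsLocallyHeavy A m cH) (hL : IsLocallyHeavy A m cL) :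
    (¬ Reducible A → ¬ IsFree A m) ∧ (IsFree A m ↔ Reducible A) := by
  have hred : IsFree A m → Reducible A := hH.reducible_of_isFree hm hL hne
  exact ⟨fun hirr hfree => hirr (hred hfree), hred, isFree_of_reducible m⟩

end ArrPaper
end

section
/- Let (A,m) be a multiarrangement of rank ℓ > 3 with two locally heavy hyperplanes H, L ∈ A, and suppose there exists a rank-3 flat X ⊆ H ∩ L such that the localization A_X is the product of an empty arrangement with an irreducible rank-3 arrangement. Then (A,m) is not free. -/
open scoped Classical
open MvPolynomial

namespace ArrPaper

variable {K : Type*} [Field K] {ℓ : ℕ}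

/-!
Let `H` be a locally heavy hyperplane with form `α_H`. Modulo `α_H`, a logarithmic derivation of
`(A, m)` sends the form of a hyperplane of the restriction to a multiple of its power given by the
Euler–Ziegler multiplicity: in each rank-two localization, where `m(H)` dominates, a scaling of the
two transverse directions reduces this to a comparison of homogeneous parts. Write
`θ_i(α_c) = α_c ^ m(c) * f_c,i` for a basis `θ`. By Saito's criterion and Cramer's rule these
divisibilities produce a vector `κ` that is orthogonal to the constant terms of `f_c` for every
`c ≠ H` but not for `c = H`.

With two heavy hyperplanes `H` and `L`, the constant terms of `f_H` and `f_L` are hence linearly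
independent, and some combination `f_H,i θ_j - f_H,j θ_i` kills `α_H` and sends `α_L` to
`α_L ^ m(L)` times a polynomial that does not vanish at the origin. On a rank-three flat this
derivation forces any two of the remaining hyperplanes to lie in a common pencil with `H` or with
`L`. Then all of them lie in a single pencil with one of the two, and the other one splits off.
-/

section LinearForms

lemma aeval_linForm_s14 {R : Type*} [CommSemiring R] [Algebra K R] (f : Fin ℓ → R) (c : Fin ℓ → K) :
    aeval f (linForm c) = ∑ j, c j • f j := by
  simp only [linForm, map_sum, map_mul, algHom_C, aeval_X, Algebra.smul_def]

lemma constantCoeff_linForm (c : Fin ℓ → K) : constantCoeff (linForm c) = 0 := by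
  simp [linForm]

lemma exists_dotProduct_eq_one_of_notMem {W : Submodule K (Fin ℓ → K)} {c : Fin ℓ → K}
    (hc : c ∉ W) : ∃ v : Fin ℓ → K, (∀ w ∈ W, w ⬝ᵥ v = 0) ∧ c ⬝ᵥ v = 1 := by
  obtain ⟨f, hf, hW⟩ := Submodule.exists_le_ker_of_notMem hc
  obtain ⟨u, rfl⟩ := (dotProductEquiv K (Fin ℓ)).surjective f
  rw [dotProductEquiv_apply_apply] at hf
  refine ⟨(u ⬝ᵥ c)⁻¹ • u, fun w hw => ?_, ?_⟩
  · have hwu : w ⬝ᵥ u = 0 := (dotProduct_comm w u).trans (hW hw)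
    rw [dotProduct_smul, hwu, smul_zero]
  · rw [dotProduct_comm, smul_dotProduct, smul_eq_mul, inv_mul_cancel₀ hf]

lemma exists_dotProduct_eq_one_of_ne_zero {c : Fin ℓ → K} (hc : c ≠ 0) :
    ∃ v : Fin ℓ → K, c ⬝ᵥ v = 1 := by
  obtain ⟨v, -, hv⟩ := exists_dotProduct_eq_one_of_notMem (mt (Submodule.mem_bot K).mp hc)
  exact ⟨v, hv⟩

end LinearForms

section Restriction

/-- The restriction of the covector `c` to the hyperplane `ker h`, extended back to `K^ℓ` by zero on
a vector `v` with `h ⬝ᵥ v = 1`. -/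
def projAlong (h v c : Fin ℓ → K) : Fin ℓ → K := c - (c ⬝ᵥ v) • h

lemma projAlong_smul_add_smul {h v : Fin ℓ → K} (hv : h ⬝ᵥ v = 1) (a b : K) (c : Fin ℓ → K) :
    projAlong h v (a • h + b • c) = b • projAlong h v c := by
  simp only [projAlong, add_dotProduct, smul_dotProduct, hv, smul_eq_mul, mul_one]
  module

lemma projAlong_dotProduct {h v : Fin ℓ → K} (hv : h ⬝ᵥ v = 1) (c : Fin ℓ → K) :
    projAlong h v c ⬝ᵥ v = 0 := by
  simp [projAlong, hv]

lemma mem_span_pair_iff_projAlong {h v : Fin ℓ → K} (hv : h ⬝ᵥ v = 1) {c d : Fin ℓ → K} :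
    d ∈ Submodule.span K {h, c} ↔ ∃ t : K, projAlong h v d = t • projAlong h v c := by
  rw [Submodule.mem_span_pair]
  constructor
  · rintro ⟨a, b, rfl⟩
    exact ⟨b, projAlong_smul_add_smul hv a b c⟩
  · rintro ⟨t, ht⟩
    rw [projAlong, sub_eq_iff_eq_add] at ht
    refine ⟨d ⬝ᵥ v - t * (c ⬝ᵥ v), t, ?_⟩
    conv_rhs => rw [ht, projAlong]
    module

/-- The restriction of polynomials to the hyperplane `ker h`, as the endomorphism of `S` induced by
the projection of `K^ℓ` onto `ker h` along a vector `v` with `h ⬝ᵥ v = 1`. -/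
noncomputable def restrictAlong (h v : Fin ℓ → K) : S K ℓ →ₐ[K] S K ℓ :=
  aeval fun j => X j - v j • linForm h

lemma restrictAlong_linForm (h v c : Fin ℓ → K) :
    restrictAlong h v (linForm c) = linForm (projAlong h v c) := by
  simp only [restrictAlong, aeval_linForm_s14, projAlong, linForm_sub, linForm_smul, smul_sub,
    Finset.sum_sub_distrib, smul_smul, ← Finset.sum_smul]
  simp only [linForm, ← smul_eq_C_mul, dotProduct]

lemma restrictAlong_comp_C (h v c : Fin ℓ → K) : ⇑(restrictAlong h v) ∘ C ∘ c = C ∘ c := by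
  funext j
  rw [Function.comp_apply, Function.comp_apply, algHom_C, algebraMap_eq]

lemma restrictAlong_self {h v : Fin ℓ → K} (hv : h ⬝ᵥ v = 1) :
    restrictAlong h v (linForm h) = 0 := by
  rw [restrictAlong_linForm, projAlong, hv, one_smul, sub_self]
  simp [linForm]

lemma constantCoeff_restrictAlong (h v : Fin ℓ → K) (f : S K ℓ) :
    constantCoeff (restrictAlong h v f) = constantCoeff f := by
  have hcomp : constantCoeff.comp (restrictAlong h v : S K ℓ →+* S K ℓ) = constantCoeff :=
    MvPolynomial.ringHom_ext (fun a => by simp)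
      fun j => by simp [restrictAlong, constantCoeff_linForm]
  exact DFunLike.congr_fun hcomp f

lemma linForm_dvd_sub_restrictAlong (h v : Fin ℓ → K) (f : S K ℓ) :
    linForm h ∣ f - restrictAlong h v f := by
  have hcomp : (Ideal.Quotient.mkₐ K (Ideal.span {linForm h})).comp (restrictAlong h v) =
      Ideal.Quotient.mkₐ K (Ideal.span {linForm h}) := by
    refine MvPolynomial.algHom_ext fun j => ?_
    have hh : Ideal.Quotient.mk (Ideal.span {linForm h}) (linForm h) = 0 :=
      Ideal.Quotient.eq_zero_iff_mem.mpr (Ideal.mem_span_singleton_self _)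
    simp [restrictAlong, smul_eq_C_mul, hh]
  rw [← Ideal.mem_span_singleton, ← Ideal.Quotient.eq]
  exact (DFunLike.congr_fun hcomp f).symm

lemma linForm_dvd_iff_restrictAlong_eq_zero {h v : Fin ℓ → K} (hv : h ⬝ᵥ v = 1) (f : S K ℓ) :
    linForm h ∣ f ↔ restrictAlong h v f = 0 := by
  constructor
  · rintro ⟨g, rfl⟩
    rw [map_mul, restrictAlong_self hv, zero_mul]
  · intro hf
    simpa [hf] using linForm_dvd_sub_restrictAlong h v f

lemma exists_eq_smul_of_linForm_dvd {c c' : Fin ℓ → K} (hc : c ≠ 0)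
    (h : linForm c ∣ linForm c') : ∃ t : K, c' = t • c := by
  obtain ⟨v, hv⟩ := exists_dotProduct_eq_one_of_ne_zero hc
  rw [linForm_dvd_iff_restrictAlong_eq_zero hv, restrictAlong_linForm] at h
  refine ⟨c' ⬝ᵥ v, ?_⟩
  by_contra hne
  exact linForm_ne_zero (sub_ne_zero.mpr hne) h

lemma associated_linForm_iff {c d : Fin ℓ → K} (hc : c ≠ 0) (hd : d ≠ 0) :
    Associated (linForm d) (linForm c) ↔ ∃ t : K, d = t • c := by
  refine ⟨fun hass => exists_eq_smul_of_linForm_dvd hc hass.symm.dvd, ?_⟩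
  rintro ⟨t, rfl⟩
  have ht : t ≠ 0 := fun ht => hd (ht ▸ zero_smul K c)
  rw [linForm_smul, smul_eq_C_mul]
  exact associated_unit_mul_left _ _ ((IsUnit.mk0 t ht).map C)

end Restriction

section FormProducts

/-- The product `∏ α_H ^ m(H)` over a set of hyperplanes; for all hyperplanes of `(A, m)` it is the
defining polynomial `Q(A, m)`. -/
noncomputable def formProd (m : (Fin ℓ → K) → ℕ) (s : Finset (Fin ℓ → K)) : S K ℓ :=
  ∏ c ∈ s, linForm c ^ m c

lemma formProd_ne_zero (m : (Fin ℓ → K) → ℕ) {s : Finset (Fin ℓ → K)} (hs : ∀ c ∈ s, c ≠ 0) :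
    formProd m s ≠ 0 :=
  Finset.prod_ne_zero_iff.mpr fun c hc => pow_ne_zero _ (linForm_ne_zero (hs c hc))

lemma linForm_pow_dvd_formProd (m : (Fin ℓ → K) → ℕ) {s : Finset (Fin ℓ → K)} {c : Fin ℓ → K}
    (hc : c ∈ s) : linForm c ^ m c ∣ formProd m s :=
  Finset.dvd_prod_of_mem (fun c => linForm c ^ m c) hc

lemma linForm_pow_mul_formProd_erase (m : (Fin ℓ → K) → ℕ) {s : Finset (Fin ℓ → K)}
    {c : Fin ℓ → K} (hc : c ∈ s) : linForm c ^ m c * formProd m (s.erase c) = formProd m s :=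
  Finset.mul_prod_erase s (fun c => linForm c ^ m c) hc

lemma exists_dvd_linForm_of_dvd_formProd {m : (Fin ℓ → K) → ℕ} {s : Finset (Fin ℓ → K)}
    {p : S K ℓ} (hp : Prime p) (h : p ∣ formProd m s) : ∃ c ∈ s, p ∣ linForm c := by
  obtain ⟨c, hc, hpc⟩ := (hp.dvd_finsetProd_iff _).mp h
  exact ⟨c, hc, hp.dvd_of_dvd_pow hpc⟩

lemma restrictAlong_formProd (h v : Fin ℓ → K) (m : (Fin ℓ → K) → ℕ) (s : Finset (Fin ℓ → K)) :
    restrictAlong h v (formProd m s) = ∏ c ∈ s, linForm (projAlong h v c) ^ m c := by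
  simp only [formProd, map_prod, map_pow, restrictAlong_linForm]

variable {A : Arrangement K ℓ} {h c : Fin ℓ → K}

lemma Arrangement.eq_of_linForm_dvd (hh : h ∈ A.hyps) (hc : c ∈ A.hyps)
    (hd : linForm h ∣ linForm c) : h = c := by
  by_contra hne
  obtain ⟨t, ht⟩ := exists_eq_smul_of_linForm_dvd (A.ne_zero h hh) hd
  exact A.nonparallel h hh c hc hne t ht

lemma Arrangement.projAlong_ne_zero (hh : h ∈ A.hyps) (hc : c ∈ A.hyps) (hne : c ≠ h)
    (v : Fin ℓ → K) : projAlong h v c ≠ 0 :=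
  sub_ne_zero.mpr (A.nonparallel h hh c hc hne.symm _)

lemma Arrangement.formProd_dvd (A : Arrangement K ℓ) (m : (Fin ℓ → K) → ℕ)
    {s : Finset (Fin ℓ → K)} (hs : s ⊆ A.hyps) {f : S K ℓ}
    (h : ∀ c ∈ s, linForm c ^ m c ∣ f) : formProd m s ∣ f := by
  refine Finset.prod_dvd_of_isRelPrime (fun c hc c' hc' hne => IsRelPrime.pow ?_) h
  rw [(prime_linForm (A.ne_zero c (hs hc))).irreducible.isRelPrime_iff_not_dvd]
  exact fun hd => hne (A.eq_of_linForm_dvd (hs hc) (hs hc') hd)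

lemma prod_prime_pow_dvd {ι M : Type*} [CommMonoidWithZero M] [IsCancelMulZero M]
    [DecompositionMonoid M] (s : Finset ι) (p : ι → M) (hp : ∀ i ∈ s, Prime (p i)) (m : ι → ℕ)
    {f : M} (h : ∀ i ∈ s, p i ^ (∑ j ∈ s with Associated (p j) (p i), m j) ∣ f) :
    ∏ i ∈ s, p i ^ m i ∣ f := by
  have hmaps : ∀ i ∈ s, Associates.mk (p i) ∈ s.image fun i => Associates.mk (p i) :=
    fun i hi => Finset.mem_image_of_mem _ hi
  rw [← Finset.prod_fiberwise_of_maps_to hmaps]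
  refine Finset.prod_dvd_of_isRelPrime (fun a _ b _ hab => ?_) fun a ha => ?_
  · refine IsRelPrime.prod_left fun i hi => IsRelPrime.prod_right fun j hj => IsRelPrime.pow ?_
    rw [Finset.mem_filter] at hi hj
    rw [(hp i hi.1).irreducible.isRelPrime_iff_not_dvd]
    intro hd
    apply hab
    rw [← hi.2, ← hj.2, Associates.mk_eq_mk_iff_associated]
    exact (hp i hi.1).associated_of_dvd (hp j hj.1) hd
  · obtain ⟨i, hi, rfl⟩ := Finset.mem_image.mp ha
    simp only [Associates.mk_eq_mk_iff_associated]
    calc ∏ j ∈ s with Associated (p j) (p i), p j ^ m j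
        ∣ ∏ j ∈ s with Associated (p j) (p i), p i ^ m j :=
          Finset.prod_dvd_prod_of_dvd _ _ fun j hj =>
            pow_dvd_pow_of_dvd (Finset.mem_filter.mp hj).2.dvd _
      _ = p i ^ (∑ j ∈ s with Associated (p j) (p i), m j) := Finset.prod_pow_eq_pow_sum ..
      _ ∣ f := h i hi

end FormProducts

section Saito

open Matrix

lemma derivation_linForm (θ : Der K ℓ) (c : Fin ℓ → K) :
    θ (linForm c) = (C ∘ c) ⬝ᵥ fun j => θ (X j) := by
  simp [linForm, dotProduct, ← smul_eq_C_mul]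

/-- The matrix of the values of a family of derivations on the coordinates, whose determinant occurs
in Saito's criterion. -/
noncomputable def derMatrix (θ : Fin ℓ → Der K ℓ) : Matrix (Fin ℓ) (Fin ℓ) (S K ℓ) :=
  Matrix.of fun i j => θ i (X j)

lemma derMatrix_mulVec (θ : Fin ℓ → Der K ℓ) (c : Fin ℓ → K) :
    derMatrix θ *ᵥ (C ∘ c) = fun i => θ i (linForm c) := by
  funext i
  rw [derivation_linForm, dotProduct_comm]
  rfl

lemma derMatrix_sum_smul (F : Matrix (Fin ℓ) (Fin ℓ) (S K ℓ)) (θ : Fin ℓ → Der K ℓ) :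
    derMatrix (fun i => ∑ j, F i j • θ j) = F * derMatrix θ := by
  ext1 i k
  have hsum := congrFun (map_sum Derivation.coeFnAddMonoidHom (fun j => F i j • θ j) .univ) (X k)
  rwa [Derivation.coeFnAddMonoidHom_apply, Finset.sum_apply] at hsum

lemma dvd_det_of_dvd_mulVec {n R : Type*} [Fintype n] [DecidableEq n] [CommRing R]
    (M : Matrix n n R) {w : n → R} {j : n} (hj : IsUnit (w j)) {d : R}
    (h : ∀ i, d ∣ (M *ᵥ w) i) : d ∣ M.det := by
  have hcramer := congrFun (mulVec_mulVec w M.adjugate M) j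
  rw [adjugate_mul, smul_mulVec, one_mulVec, Pi.smul_apply, smul_eq_mul] at hcramer
  rw [← hj.dvd_mul_right, ← hcramer]
  exact Finset.dvd_sum fun i _ => (h i).mul_left _

lemma dvd_det_of_dvd_mulVec_C {M : Matrix (Fin ℓ) (Fin ℓ) (S K ℓ)} {w : Fin ℓ → K} (hw : w ≠ 0)
    {d : S K ℓ} (h : ∀ i, d ∣ (M *ᵥ (C ∘ w)) i) : d ∣ M.det := by
  obtain ⟨j, hj⟩ := Function.ne_iff.mp hw
  exact dvd_det_of_dvd_mulVec M (j := j) ((IsUnit.mk0 _ hj).map C) h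

variable {A : Arrangement K ℓ} {m : (Fin ℓ → K) → ℕ} {θ : Fin ℓ → Der K ℓ}

lemma formProd_dvd_det (hθ : ∀ i, IsLogDer A m (θ i)) :
    formProd m A.hyps ∣ (derMatrix θ).det := by
  refine A.formProd_dvd m subset_rfl fun c hc =>
    dvd_det_of_dvd_mulVec_C (A.ne_zero c hc) fun i => ?_
  rw [derMatrix_mulVec]
  exact hθ i c hc

lemma IsDerBasis.det_dvd_det (hθ : IsDerBasis A m θ) {η : Fin ℓ → Der K ℓ}
    (hη : ∀ i, IsLogDer A m (η i)) : (derMatrix θ).det ∣ (derMatrix η).det := by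
  choose F hF using fun i => (hθ.2 (η i) (hη i)).exists
  have hmat : derMatrix η = Matrix.of F * derMatrix θ := by
    rw [funext hF]
    exact derMatrix_sum_smul (Matrix.of F) θ
  rw [hmat, det_mul]
  exact dvd_mul_left _ _

lemma IsDerBasis.det_dvd_formProd_pow (hθ : IsDerBasis A m θ) :
    (derMatrix θ).det ∣ formProd m A.hyps ^ ℓ := by
  let η : Fin ℓ → Der K ℓ := fun i => formProd m A.hyps • pderiv i
  have hdet : (derMatrix η).det = formProd m A.hyps ^ ℓ := by
    have hη : derMatrix η = formProd m A.hyps • (1 : Matrix (Fin ℓ) (Fin ℓ) (S K ℓ)) := by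
      ext1 i j
      simp [derMatrix, η, pderiv_X, one_apply, Pi.single_apply, eq_comm]
    rw [hη, det_smul, det_one, mul_one, Fintype.card_fin]
  rw [← hdet]
  exact hθ.det_dvd_det fun i c hc => (linForm_pow_dvd_formProd m hc).mul_right _

/-- The witness is `q • (∂_j + c_j (α ^ m - 1) ∂_v)`, where `α` is the form of `c`, `q` the product
over the other hyperplanes and `c ⬝ᵥ v = 1`: in coordinates that begin with `α` these are `q` times
the `∂_j`, except that `∂_α` is multiplied by `α ^ m`. -/
lemma exists_isLogDer_det_eq {c : Fin ℓ → K} (hc : c ∈ A.hyps) :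
    ∃ η : Fin ℓ → Der K ℓ, (∀ i, IsLogDer A m (η i)) ∧
      (derMatrix η).det = formProd m (A.hyps.erase c) ^ ℓ * linForm c ^ m c := by
  obtain ⟨v, hv⟩ := exists_dotProduct_eq_one_of_ne_zero (A.ne_zero c hc)
  set q := formProd m (A.hyps.erase c)
  let b : Fin ℓ → S K ℓ := (linForm c ^ m c - 1) • (C ∘ v)
  have hb (d : Fin ℓ → K) : (C ∘ d) ⬝ᵥ b = (linForm c ^ m c - 1) * C (d ⬝ᵥ v) := by
    rw [RingHom.map_dotProduct, dotProduct_smul, smul_eq_mul]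
  let η : Fin ℓ → Der K ℓ := fun j => q • mkDerivation K (Pi.single j 1 + (C (c j) : S K ℓ) • b)
  have hη (j : Fin ℓ) (d : Fin ℓ → K) :
      η j (linForm d) = q * (C (d j) + C (c j) * ((linForm c ^ m c - 1) * C (d ⬝ᵥ v))) := by
    have hηX : (fun k => η j (X k)) = q • (Pi.single j 1 + (C (c j) : S K ℓ) • b) := by
      funext k
      simp [η, mkDerivation_X]
    rw [derivation_linForm, hηX, dotProduct_smul, dotProduct_add, dotProduct_single_one,
      dotProduct_smul, hb]
    rfl
  refine ⟨η, fun j d hd => ?_, ?_⟩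
  · rw [hη]
    by_cases hdc : d = c
    · subst hdc
      rw [hv, map_one]
      exact ⟨q * C (d j), by ring⟩
    · exact (linForm_pow_dvd_formProd m (Finset.mem_erase.mpr ⟨hdc, hd⟩)).mul_right _
  · have hmat : derMatrix η =
        q • (1 + replicateCol Unit (C ∘ c : Fin ℓ → S K ℓ) * replicateRow Unit b) := by
      ext1 j k
      simp [derMatrix, η, mkDerivation_X, one_apply, Pi.single_apply, mul_apply, eq_comm]
    rw [hmat, det_smul, det_one_add_replicateCol_mul_replicateRow, dotProduct_comm, hb, hv,
      map_one, mul_one, add_sub_cancel, Fintype.card_fin]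

lemma IsDerBasis.associated_formProd_det (hθ : IsDerBasis A m θ) :
    Associated (formProd m A.hyps) (derMatrix θ).det := by
  obtain ⟨s, hs⟩ := formProd_dvd_det hθ.1
  have hQ : formProd m A.hyps ≠ 0 := formProd_ne_zero m A.ne_zero
  have hs_formProd : s ∣ formProd m A.hyps ^ ℓ :=
    (Dvd.intro_left _ hs.symm).trans hθ.det_dvd_formProd_pow
  have hs_erase (c) (hc : c ∈ A.hyps) : s ∣ formProd m (A.hyps.erase c) ^ ℓ := by
    obtain ⟨η, hη, hdet⟩ := exists_isLogDer_det_eq (m := m) hc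
    have hdvd := hθ.det_dvd_det hη
    rw [hdet, hs, ← linForm_pow_mul_formProd_erase m hc, mul_assoc, mul_comm (_ ^ ℓ)] at hdvd
    exact (dvd_mul_left _ _).trans
      ((mul_dvd_mul_iff_left (pow_ne_zero _ (linForm_ne_zero (A.ne_zero c hc)))).mp hdvd)
  suffices hu : IsUnit s from hs ▸ associated_mul_unit_right _ _ hu
  by_contra hu
  obtain ⟨p, hp, hps⟩ := WfDvdMonoid.exists_irreducible_factor hu
    (ne_zero_of_dvd_ne_zero (pow_ne_zero _ hQ) hs_formProd)
  obtain ⟨c, hc, hpc⟩ := exists_dvd_linForm_of_dvd_formProd hp.prime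
    (hp.prime.dvd_of_dvd_pow (hps.trans hs_formProd))
  obtain ⟨c', hc', hpc'⟩ := exists_dvd_linForm_of_dvd_formProd hp.prime
    (hp.prime.dvd_of_dvd_pow (hps.trans (hs_erase c hc)))
  obtain ⟨hne, hc'A⟩ := Finset.mem_erase.mp hc'
  have hass := hp.prime.associated_of_dvd (prime_linForm (A.ne_zero c hc)) hpc
  exact hne (A.eq_of_linForm_dvd hc hc'A (hass.symm.dvd.trans hpc')).symm

end Saito

section Scaling

/-- The ideal of the flat encoded by `W`, generated by the linear forms with covector in `W`. -/
noncomputable def formIdeal (W : Submodule K (Fin ℓ → K)) : Ideal (S K ℓ) :=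
  Ideal.span (linForm '' (W : Set (Fin ℓ → K)))

lemma linForm_mem_formIdeal {W : Submodule K (Fin ℓ → K)} {c : Fin ℓ → K} (hc : c ∈ W) :
    linForm c ∈ formIdeal W :=
  Ideal.subset_span (Set.mem_image_of_mem _ hc)

/-- The homomorphism `S → S[t]` that multiplies the linear forms in the range of a projection `π` by
`t` and fixes those in its kernel; the coefficient of `t ^ d` is the part of degree `d` in the
directions of the range. -/
noncomputable def scalingHom (π : (Fin ℓ → K) →ₗ[K] Fin ℓ → K) :
    S K ℓ →ₐ[K] Polynomial (S K ℓ) :=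
  aeval fun j => Polynomial.C (X j - linForm (π (Pi.single j 1))) +
    Polynomial.C (linForm (π (Pi.single j 1))) * Polynomial.X

variable {W : Submodule K (Fin ℓ → K)} {π : (Fin ℓ → K) →ₗ[K] Fin ℓ → K}

lemma scalingHom_linForm (hπ : LinearMap.IsProj W π) {c : Fin ℓ → K} (hc : c ∈ W) :
    scalingHom π (linForm c) = Polynomial.C (linForm c) * Polynomial.X := by
  have hπc : linForm c = ∑ j, c j • linForm (π (Pi.single j 1)) := by
    let linFormₗ : (Fin ℓ → K) →ₗ[K] S K ℓ := ⟨⟨linForm, linForm_add⟩, linForm_smul⟩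
    have hsum := congrArg (linFormₗ ∘ₗ π) (pi_eq_sum_univ' c)
    simp only [map_sum, map_smul] at hsum
    exact (congrArg linForm (hπ.map_id c hc)).symm.trans hsum
  have hX : linForm c = ∑ j, c j • (X j : S K ℓ) := by simp only [linForm, smul_eq_C_mul]
  calc scalingHom π (linForm c)
      = Polynomial.C (∑ j, c j • X j - ∑ j, c j • linForm (π (Pi.single j 1))) +
          Polynomial.C (∑ j, c j • linForm (π (Pi.single j 1))) * Polynomial.X := by
        simp only [scalingHom, aeval_linForm_s14, smul_add, Finset.sum_add_distrib,
          ← Finset.sum_sub_distrib, ← smul_sub, map_sum, ← Polynomial.smul_C, Finset.sum_mul,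
          smul_mul_assoc]
    _ = Polynomial.C (linForm c) * Polynomial.X := by
        rw [← hπc, ← hX, sub_self, map_zero, zero_add]

lemma scalingHom_mem_reesAlgebra (hπ : LinearMap.IsProj W π) (g : S K ℓ) :
    scalingHom π g ∈ reesAlgebra (formIdeal W) := by
  induction g using MvPolynomial.induction_on with
  | C a =>
    rw [algHom_C]
    exact Subalgebra.algebraMap_mem (reesAlgebra (formIdeal W)) (C a)
  | add p q hp hq =>
    rw [map_add]
    exact add_mem hp hq
  | mul_X p j hp =>
    rw [map_mul, scalingHom, aeval_X]
    refine mul_mem hp (add_mem (Subalgebra.algebraMap_mem (reesAlgebra (formIdeal W)) _) ?_)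
    rw [Polynomial.C_mul_X_eq_monomial]
    refine reesAlgebra.monomial_mem.mpr ?_
    rw [pow_one]
    exact linForm_mem_formIdeal (hπ.map_mem _)

lemma eval_one_scalingHom (π : (Fin ℓ → K) →ₗ[K] Fin ℓ → K) (g : S K ℓ) :
    (scalingHom π g).eval 1 = g := by
  have hcomp : (Polynomial.evalRingHom 1).comp (scalingHom π : S K ℓ →+* Polynomial (S K ℓ)) =
      RingHom.id (S K ℓ) :=
    MvPolynomial.ringHom_ext
      (fun a => by simp [algHom_C, IsScalarTower.algebraMap_apply K (S K ℓ) (Polynomial (S K ℓ))])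
      fun j => by simp [scalingHom]
  exact DFunLike.congr_fun hcomp g

lemma X_pow_dvd_scalingHom (hπ : LinearMap.IsProj W π) {n : ℕ} {g : S K ℓ}
    (hg : g ∈ formIdeal W ^ n) : Polynomial.X ^ n ∣ scalingHom π g := by
  have hle : formIdeal W ≤ (Ideal.span {Polynomial.X}).comap (scalingHom π) := by
    refine Ideal.span_le.mpr ?_
    rintro _ ⟨c, hc, rfl⟩
    rw [SetLike.mem_coe, Ideal.mem_comap, scalingHom_linForm hπ hc, Ideal.mem_span_singleton]
    exact dvd_mul_left _ _
  rw [← Ideal.mem_span_singleton, ← Ideal.span_singleton_pow]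
  exact Ideal.le_comap_pow _ n (Ideal.pow_right_mono hle n hg)

lemma Arrangement.mem_span_formProd_sup_formIdeal_pow (A : Arrangement K ℓ)
    (m : (Fin ℓ → K) → ℕ) {s : Finset (Fin ℓ → K)} (hs : s ⊆ A.hyps) (hsW : ∀ c ∈ s, c ∈ W)
    {n : ℕ} {g : S K ℓ}
    (hg : ∀ c ∈ s, g ∈ Ideal.span {linForm c ^ m c} ⊔ formIdeal W ^ n) :
    g ∈ Ideal.span {formProd m s} ⊔ formIdeal W ^ n := by
  obtain ⟨p, hp⟩ := W.subtype.exists_leftInverse_of_injective W.ker_subtype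
  let π := W.subtype ∘ₗ p
  have hπ : LinearMap.IsProj W π :=
    ⟨fun c => (p c).2, fun w hw => congrArg Subtype.val (LinearMap.congr_fun hp (⟨w, hw⟩ : W))⟩
  rw [← eval_one_scalingHom π g, Polynomial.eval_eq_sum_range]
  simp only [one_pow, mul_one]
  refine sum_mem fun d _ => ?_
  obtain hd | hd := lt_or_ge d n
  · refine Ideal.mem_sup_left (Ideal.mem_span_singleton.mpr (A.formProd_dvd m hs fun c hc => ?_))
    obtain ⟨a, e, he, rfl⟩ := Ideal.mem_span_singleton_sup.mp (hg c hc)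
    rw [map_add, Polynomial.coeff_add,
      Polynomial.X_pow_dvd_iff.mp (X_pow_dvd_scalingHom hπ he) d hd, add_zero, map_mul, map_pow,
      scalingHom_linForm hπ (hsW c hc), mul_pow, ← map_pow]
    exact Polynomial.C_dvd_iff_dvd_coeff _ _ |>.mp ((dvd_mul_right _ _).mul_left _) d
  · exact Ideal.mem_sup_right
      (Ideal.pow_le_pow_right hd (scalingHom_mem_reesAlgebra hπ g d))

end Scaling

section EulerZieglerRestriction

variable {A : Arrangement K ℓ} {m : (Fin ℓ → K) → ℕ} {η : Der K ℓ}
  {U : Submodule K (Fin ℓ → K)} {h c d v : Fin ℓ → K}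

lemma mem_locHyps : c ∈ locHyps A U ↔ c ∈ A.hyps ∧ c ∈ U := Finset.mem_filter

lemma left_mem_span_pair : h ∈ Submodule.span K {h, c} :=
  Submodule.mem_span_of_mem (Set.mem_insert h {c})

lemma right_mem_span_pair : c ∈ Submodule.span K {h, c} :=
  Submodule.mem_span_of_mem (Set.mem_insert_of_mem h rfl)

lemma Arrangement.finrank_span_pair (hh : h ∈ A.hyps) (hc : c ∈ A.hyps) (hne : c ≠ h) :
    Module.finrank K (Submodule.span K {h, c}) = 2 := by
  have hli : LinearIndependent K ![h, c] :=
    (LinearIndependent.pair_iff' (A.ne_zero h hh)).mpr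
      fun t => (A.nonparallel h hh c hc hne.symm t).symm
  rw [← Matrix.range_cons_cons_empty h c ![], finrank_span_eq_card hli, Fintype.card_fin]

lemma Arrangement.isFlatOfRank_span_pair (hh : h ∈ A.hyps) (hc : c ∈ A.hyps) (hne : c ≠ h) :
    IsFlatOfRank A (Submodule.span K {h, c}) 2 := by
  refine ⟨A.finrank_span_pair hh hc hne, le_antisymm ?_ (Submodule.span_mono ?_)⟩
  · exact Submodule.span_le.mpr fun d hd => (mem_locHyps.mp hd).2
  · rintro d (rfl | rfl)
    · exact mem_locHyps.mpr ⟨hh, left_mem_span_pair⟩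
    · exact mem_locHyps.mpr ⟨hc, right_mem_span_pair⟩

lemma linForm_projAlong_dvd_linForm_projAlong (hv : h ⬝ᵥ v = 1)
    (hd : d ∈ Submodule.span K {h, c}) :
    linForm (projAlong h v c) ∣ linForm (projAlong h v d) := by
  obtain ⟨t, ht⟩ := (mem_span_pair_iff_projAlong hv).mp hd
  rw [ht, linForm_smul, smul_eq_C_mul]
  exact dvd_mul_left _ _

lemma linForm_pow_dvd_restrictAlong_of_mem_formIdeal_pow (hv : h ⬝ᵥ v = 1) {n : ℕ} {g : S K ℓ}
    (hg : g ∈ formIdeal (Submodule.span K {h, c}) ^ n) :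
    linForm (projAlong h v c) ^ n ∣ restrictAlong h v g := by
  have hle : formIdeal (Submodule.span K {h, c}) ≤
      (Ideal.span {linForm (projAlong h v c)}).comap (restrictAlong h v) := by
    refine Ideal.span_le.mpr ?_
    rintro _ ⟨d, hd, rfl⟩
    rw [SetLike.mem_coe, Ideal.mem_comap, restrictAlong_linForm, Ideal.mem_span_singleton]
    exact linForm_projAlong_dvd_linForm_projAlong hv hd
  rw [← Ideal.mem_span_singleton, ← Ideal.span_singleton_pow]
  exact Ideal.le_comap_pow _ n (Ideal.pow_right_mono hle n hg)

lemma linForm_pow_dvd_restrictAlong_formProd (hv : h ⬝ᵥ v = 1) (m : (Fin ℓ → K) → ℕ)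
    {s : Finset (Fin ℓ → K)} (hs : ∀ d ∈ s, d ∈ Submodule.span K {h, c}) :
    linForm (projAlong h v c) ^ (∑ d ∈ s, m d) ∣ restrictAlong h v (formProd m s) := by
  rw [restrictAlong_formProd, ← Finset.prod_pow_eq_pow_sum]
  exact Finset.prod_dvd_prod_of_dvd _ _ fun d hd =>
    pow_dvd_pow_of_dvd (linForm_projAlong_dvd_linForm_projAlong hv (hs d hd)) _

lemma IsLogDer.apply_projAlong_mem (hη : IsLogDer A m η) (hh : h ∈ A.hyps) (hd : d ∈ A.hyps)
    (hne : d ≠ h) (hv : h ⬝ᵥ v = 1) (hdc : d ∈ Submodule.span K {h, c}) :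
    η (linForm (projAlong h v c)) ∈
      Ideal.span {linForm d ^ m d} ⊔ Ideal.span {linForm h ^ m h} := by
  obtain ⟨t, ht⟩ := (mem_span_pair_iff_projAlong hv).mp hdc
  have ht0 : t ≠ 0 := by
    rintro rfl
    exact A.projAlong_ne_zero hh hd hne v (ht.trans (zero_smul K _))
  have hη_eq : η (linForm (projAlong h v c)) =
      C t⁻¹ * η (linForm d) - C (t⁻¹ * (d ⬝ᵥ v)) * η (linForm h) := by
    rw [(inv_smul_eq_iff₀ ht0).mpr ht |>.symm, projAlong, smul_sub, smul_smul, linForm_sub,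
      linForm_smul, linForm_smul, map_sub, η.map_smul, η.map_smul, smul_eq_C_mul, smul_eq_C_mul]
  rw [hη_eq]
  exact sub_mem
    (Ideal.mem_sup_left (Ideal.mul_mem_left _ _ (Ideal.mem_span_singleton.mpr (hη d hd))))
    (Ideal.mem_sup_right (Ideal.mul_mem_left _ _ (Ideal.mem_span_singleton.mpr (hη h hh))))

lemma linForm_pow_dvd_restrictAlong_apply_of_heavy (hη : IsLogDer A m η) (hh : h ∈ A.hyps)
    (hv : h ⬝ᵥ v = 1)
    (hheavy : ∑ d ∈ (locHyps A (Submodule.span K {h, c})).erase h, m d ≤ m h) :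
    linForm (projAlong h v c) ^ (∑ d ∈ (locHyps A (Submodule.span K {h, c})).erase h, m d) ∣
      restrictAlong h v (η (linForm (projAlong h v c))) := by
  set W := Submodule.span K {h, c}
  set s := (locHyps A W).erase h
  have hs (d) (hd : d ∈ s) : d ≠ h ∧ d ∈ A.hyps ∧ d ∈ W :=
    ⟨(Finset.mem_erase.mp hd).1, mem_locHyps.mp (Finset.mem_erase.mp hd).2⟩
  have hmem : η (linForm (projAlong h v c)) ∈
      Ideal.span {formProd m s} ⊔ formIdeal W ^ (∑ d ∈ s, m d) := by
    have hpow : Ideal.span {linForm h ^ m h} ≤ formIdeal W ^ (∑ d ∈ s, m d) := by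
      rw [Ideal.span_singleton_le_iff_mem]
      exact Ideal.pow_le_pow_right hheavy
        (Ideal.pow_mem_pow (linForm_mem_formIdeal left_mem_span_pair) _)
    refine A.mem_span_formProd_sup_formIdeal_pow m (fun d hd => (hs d hd).2.1)
      (fun d hd => (hs d hd).2.2) fun d hd => ?_
    obtain ⟨hne, hdA, hdW⟩ := hs d hd
    exact sup_le_sup_left hpow _ (hη.apply_projAlong_mem hh hdA hne hv hdW)
  obtain ⟨a, b, hb, hab⟩ := Ideal.mem_span_singleton_sup.mp hmem
  rw [← hab, map_add, map_mul]
  exact dvd_add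
    ((linForm_pow_dvd_restrictAlong_formProd hv m fun d hd => (hs d hd).2.2).mul_left _)
    (linForm_pow_dvd_restrictAlong_of_mem_formIdeal_pow hv hb)

lemma locHyps_span_pair_erase_eq_singleton (hh : h ∈ A.hyps) (hc : c ∈ A.hyps) (hne : c ≠ h)
    (hcard : (locHyps A (Submodule.span K {h, c})).card < 3) :
    (locHyps A (Submodule.span K {h, c})).erase h = {c} := by
  have hmem : h ∈ locHyps A (Submodule.span K {h, c}) :=
    mem_locHyps.mpr ⟨hh, left_mem_span_pair⟩
  refine (Finset.eq_of_subset_of_card_le (Finset.singleton_subset_iff.mpr ?_) ?_).symm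
  · exact Finset.mem_erase.mpr ⟨hne, mem_locHyps.mpr ⟨hc, right_mem_span_pair⟩⟩
  · rw [Finset.card_erase_of_mem hmem, Finset.card_singleton]
    omega

lemma IsLocallyHeavy.linForm_pow_dvd_restrictAlong_apply (hh : IsLocallyHeavy A m h)
    (hm : 0 < m h) (hη : IsLogDer A m η) (hc : c ∈ A.hyps) (hne : c ≠ h) (hv : h ⬝ᵥ v = 1) :
    linForm (projAlong h v c) ^ (∑ d ∈ (locHyps A (Submodule.span K {h, c})).erase h, m d) ∣
      restrictAlong h v (η (linForm (projAlong h v c))) := by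
  obtain hcard | hcard := le_or_gt 3 (locHyps A (Submodule.span K {h, c})).card
  · exact linForm_pow_dvd_restrictAlong_apply_of_heavy hη hh.1 hv
      (hh.2 _ (A.isFlatOfRank_span_pair hh.1 hc hne) left_mem_span_pair hcard)
  · rw [locHyps_span_pair_erase_eq_singleton hh.1 hc hne hcard, Finset.sum_singleton]
    have hmem := hη.apply_projAlong_mem hh.1 hc hne hv right_mem_span_pair
    obtain ⟨a, b, hb, hab⟩ := Ideal.mem_span_singleton_sup.mp hmem
    have hb0 : restrictAlong h v b = 0 :=
      (linForm_dvd_iff_restrictAlong_eq_zero hv b).mp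
        ((dvd_pow_self _ hm.ne').trans (Ideal.mem_span_singleton.mp hb))
    rw [← hab, map_add, map_mul, map_pow, restrictAlong_linForm, hb0, add_zero]
    exact dvd_mul_left _ _

end EulerZieglerRestriction

section HeavyBases

open Matrix

lemma cramer_transpose_dotProduct_mulVec {n R : Type*} [Fintype n] [DecidableEq n] [CommRing R]
    (M : Matrix n n R) (b w : n → R) :
    Mᵀ.cramer b ⬝ᵥ (M *ᵥ w) = M.det * (b ⬝ᵥ w) := by
  rw [dotProduct_mulVec, ← mulVec_transpose, mulVec_cramer, det_transpose, smul_dotProduct,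
    smul_eq_mul]

lemma exists_mul_sub_mul_ne_zero {n R : Type*} [Fintype n] [CommRing R] [NoZeroDivisors R]
    {κ f g : n → R} (hf : κ ⬝ᵥ f ≠ 0) (hg : κ ⬝ᵥ g = 0) (hg0 : g ≠ 0) :
    ∃ i j, f i * g j - f j * g i ≠ 0 := by
  obtain ⟨i, hi⟩ := Function.ne_iff.mp hg0
  have hκ : κ ⬝ᵥ (f i • g - g i • f) ≠ 0 := by
    rw [dotProduct_sub, dotProduct_smul, dotProduct_smul, hg, smul_zero, zero_sub, neg_ne_zero]
    exact smul_ne_zero hi hf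
  have hvec : f i • g - g i • f ≠ 0 := fun h0 => hκ (by rw [h0, dotProduct_zero])
  obtain ⟨j, hj⟩ := Function.ne_iff.mp hvec
  refine ⟨i, j, ?_⟩
  rw [mul_comm (f j)]
  exact hj

variable {A : Arrangement K ℓ} {m : (Fin ℓ → K) → ℕ} {θ : Fin ℓ → Der K ℓ}
  {h l v : Fin ℓ → K}

/-- The multiplicity is the Euler–Ziegler multiplicity `|m_X| - m(H)` of `X = ker h ∩ ker c`. -/
lemma sum_associated_linForm_projAlong (m : (Fin ℓ → K) → ℕ) (hh : h ∈ A.hyps)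
    (hv : h ⬝ᵥ v = 1) {c : Fin ℓ → K} (hc : c ∈ A.hyps.erase h) :
    ∑ d ∈ A.hyps.erase h with
        Associated (linForm (projAlong h v d)) (linForm (projAlong h v c)), m d =
      ∑ d ∈ (locHyps A (Submodule.span K {h, c})).erase h, m d := by
  have hproj {d} (hd : d ∈ A.hyps.erase h) : projAlong h v d ≠ 0 :=
    A.projAlong_ne_zero hh (Finset.mem_of_mem_erase hd) (Finset.ne_of_mem_erase hd) v
  refine Finset.sum_congr (Finset.ext fun d => ?_) fun _ _ => rfl
  rw [Finset.mem_filter, Finset.mem_erase, Finset.mem_erase, mem_locHyps, and_assoc]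
  refine and_congr_right fun hne => and_congr_right fun hd => ?_
  rw [associated_linForm_iff (hproj hc) (hproj (Finset.mem_erase.mpr ⟨hne, hd⟩)),
    mem_span_pair_iff_projAlong hv]

lemma mapMatrix_restrictAlong_mulVec (h v c : Fin ℓ → K) (M : Matrix (Fin ℓ) (Fin ℓ) (S K ℓ))
    (i : Fin ℓ) : ((restrictAlong h v).mapMatrix M *ᵥ (C ∘ c)) i =
      restrictAlong h v ((M *ᵥ (C ∘ c)) i) := by
  have hmap := RingHom.map_dotProduct (restrictAlong h v : S K ℓ →+* S K ℓ) (M i) (C ∘ c)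
  rw [RingHom.coe_coe, restrictAlong_comp_C] at hmap
  exact hmap.symm

lemma IsLocallyHeavy.restrictAlong_formProd_dvd_cramer (hh : IsLocallyHeavy A m h) (hm : 0 < m h)
    (hθ : ∀ i, IsLogDer A m (θ i)) (hv : h ⬝ᵥ v = 1) (i : Fin ℓ) :
    restrictAlong h v (formProd m (A.hyps.erase h)) ∣
      restrictAlong h v ((derMatrix θ)ᵀ.cramer (C ∘ v) i) := by
  have hproj {c} (hc : c ∈ A.hyps.erase h) : projAlong h v c ≠ 0 :=
    A.projAlong_ne_zero hh.1 (Finset.mem_of_mem_erase hc) (Finset.ne_of_mem_erase hc) v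
  rw [restrictAlong_formProd]
  refine prod_prime_pow_dvd _ _ (fun c hc => prime_linForm (hproj hc)) m fun c hc => ?_
  rw [sum_associated_linForm_projAlong m hh.1 hv hc, cramer_transpose_apply, AlgHom.map_det]
  refine dvd_det_of_dvd_mulVec_C (hproj hc) fun k => ?_
  rw [mapMatrix_restrictAlong_mulVec]
  obtain rfl | hki := eq_or_ne k i
  · have hrow : ((derMatrix θ).updateRow k (C ∘ v) *ᵥ (C ∘ projAlong h v c)) k = 0 := by
      rw [mulVec, updateRow_self, dotProduct_comm, ← RingHom.map_dotProduct,
        projAlong_dotProduct hv, map_zero]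
    rw [hrow, map_zero]
    exact dvd_zero _
  · have hrow : ((derMatrix θ).updateRow i (C ∘ v) *ᵥ (C ∘ projAlong h v c)) k =
        θ k (linForm (projAlong h v c)) := by
      rw [mulVec, updateRow_ne hki]
      exact congrFun (derMatrix_mulVec θ _) k
    rw [hrow]
    exact hh.linForm_pow_dvd_restrictAlong_apply hm (hθ k) (Finset.mem_of_mem_erase hc)
      (Finset.ne_of_mem_erase hc) hv

lemma cramer_dotProduct_apply_linForm (θ : Fin ℓ → Der K ℓ) (v c : Fin ℓ → K) :
    (derMatrix θ)ᵀ.cramer (C ∘ v) ⬝ᵥ (fun i => θ i (linForm c)) =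
      (derMatrix θ).det * C (v ⬝ᵥ c) := by
  rw [← derMatrix_mulVec, cramer_transpose_dotProduct_mulVec, ← RingHom.map_dotProduct]

lemma IsDerBasis.exists_isUnit_dotProduct_restrictAlong (hθ : IsDerBasis A m θ)
    (hh : IsLocallyHeavy A m h) (hm : 0 < m h) (hv : h ⬝ᵥ v = 1)
    {f : (Fin ℓ → K) → Fin ℓ → S K ℓ}
    (hf : ∀ c ∈ A.hyps, ∀ i, θ i (linForm c) = linForm c ^ m c * f c i) :
    ∃ k : Fin ℓ → S K ℓ, IsUnit (k ⬝ᵥ (restrictAlong h v ∘ f h)) ∧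
      ∀ l ∈ A.hyps, l ≠ h → k ⬝ᵥ (restrictAlong h v ∘ f l) = 0 := by
  let ρ := restrictAlong h v
  let q := formProd m (A.hyps.erase h)
  let μ := (derMatrix θ)ᵀ.cramer (C ∘ v)
  obtain ⟨u, hu⟩ := hθ.associated_formProd_det
  rw [← linForm_pow_mul_formProd_erase m hh.1] at hu
  have hμ (c) (hc : c ∈ A.hyps) :
      linForm c ^ m c * (μ ⬝ᵥ f c) = linForm h ^ m h * q * (u : S K ℓ) * C (v ⬝ᵥ c) := by
    have hfc : (fun i => θ i (linForm c)) = linForm c ^ m c • f c := funext (hf c hc)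
    rw [hu, ← cramer_dotProduct_apply_linForm, hfc, dotProduct_smul, smul_eq_mul]
  choose k hk using hh.restrictAlong_formProd_dvd_cramer hm hθ.1 hv
  have hρμ (g : Fin ℓ → S K ℓ) : ρ (μ ⬝ᵥ g) = ρ q * (k ⬝ᵥ (ρ ∘ g)) := by
    have hkμ : ρ ∘ μ = ρ q • k := funext hk
    rw [← smul_eq_mul, ← smul_dotProduct, ← hkμ]
    exact RingHom.map_dotProduct (ρ : S K ℓ →+* S K ℓ) μ g
  have hproj {c} (hc : c ∈ A.hyps) (hne : c ≠ h) : linForm (projAlong h v c) ≠ 0 :=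
    linForm_ne_zero (A.projAlong_ne_zero hh.1 hc hne v)
  have hρq : ρ q ≠ 0 := by
    rw [restrictAlong_formProd]
    exact Finset.prod_ne_zero_iff.mpr fun c hc =>
      pow_ne_zero _ (hproj (Finset.mem_of_mem_erase hc) (Finset.ne_of_mem_erase hc))
  refine ⟨k, ?_, fun l hl hne => ?_⟩
  · have hμh : μ ⬝ᵥ f h = q * u := by
      refine mul_left_cancel₀ (pow_ne_zero (m h) (linForm_ne_zero (A.ne_zero h hh.1))) ?_
      rw [hμ h hh.1, dotProduct_comm, hv, map_one, mul_one, mul_assoc]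
    have hunit : k ⬝ᵥ (ρ ∘ f h) = ρ u := mul_left_cancel₀ hρq (by rw [← hρμ, hμh, map_mul])
    exact hunit ▸ u.isUnit.map ρ
  · have hρl := congrArg ρ (hμ l hl)
    rw [map_mul, map_mul, map_mul, map_mul, map_pow, map_pow, restrictAlong_self hv,
      zero_pow hm.ne', zero_mul, zero_mul, zero_mul, restrictAlong_linForm, hρμ] at hρl
    exact (mul_eq_zero.mp ((mul_eq_zero.mp hρl).resolve_left
      (pow_ne_zero (m l) (hproj hl hne)))).resolve_left hρq

lemma IsDerBasis.exists_dotProduct_constantCoeff (hθ : IsDerBasis A m θ)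
    (hh : IsLocallyHeavy A m h) (hm : 0 < m h) {f : (Fin ℓ → K) → Fin ℓ → S K ℓ}
    (hf : ∀ c ∈ A.hyps, ∀ i, θ i (linForm c) = linForm c ^ m c * f c i) :
    ∃ κ : Fin ℓ → K, κ ⬝ᵥ (constantCoeff ∘ f h) ≠ 0 ∧
      ∀ l ∈ A.hyps, l ≠ h → κ ⬝ᵥ (constantCoeff ∘ f l) = 0 := by
  obtain ⟨v, hv⟩ := exists_dotProduct_eq_one_of_ne_zero (A.ne_zero h hh.1)
  obtain ⟨k, hkh, hk⟩ := hθ.exists_isUnit_dotProduct_restrictAlong hh hm hv hf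
  have hκ (g : Fin ℓ → S K ℓ) : (constantCoeff ∘ k) ⬝ᵥ (constantCoeff ∘ g) =
      constantCoeff (k ⬝ᵥ (restrictAlong h v ∘ g)) := by
    rw [RingHom.map_dotProduct]
    exact congrArg _ (funext fun i => (constantCoeff_restrictAlong h v (g i)).symm)
  refine ⟨constantCoeff ∘ k, ?_, fun l hl hne => ?_⟩
  · rw [hκ]
    exact (hkh.map constantCoeff).ne_zero
  · rw [hκ, hk l hl hne, map_zero]

lemma IsDerBasis.exists_isLogDer_apply_eq_zero (hθ : IsDerBasis A m θ)
    (hh : IsLocallyHeavy A m h) (hl : IsLocallyHeavy A m l) (hne : h ≠ l) (hmh : 0 < m h)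
    (hml : 0 < m l) :
    ∃ η : Der K ℓ, IsLogDer A m η ∧ η (linForm h) = 0 ∧
      ∃ g : S K ℓ, η (linForm l) = linForm l ^ m l * g ∧ constantCoeff g ≠ 0 := by
  choose! f hf using fun c (hc : c ∈ A.hyps) i => hθ.1 i c hc
  obtain ⟨κ, hκh, hκ⟩ := hθ.exists_dotProduct_constantCoeff hh hmh hf
  obtain ⟨κ', hκ'l, -⟩ := hθ.exists_dotProduct_constantCoeff hl hml hf
  have hfl : constantCoeff ∘ f l ≠ 0 := fun h0 => hκ'l (h0 ▸ dotProduct_zero κ')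
  obtain ⟨i, j, hij⟩ := exists_mul_sub_mul_ne_zero hκh (hκ l hl.1 hne.symm) hfl
  have hη (c) (hc : c ∈ A.hyps) : (f h i • θ j - f h j • θ i) (linForm c) =
      linForm c ^ m c * (f h i * f c j - f h j * f c i) := by
    rw [Derivation.sub_apply, Derivation.smul_apply, Derivation.smul_apply, hf c hc, hf c hc,
      smul_eq_mul, smul_eq_mul]
    ring
  refine ⟨f h i • θ j - f h j • θ i, fun c hc => ⟨_, hη c hc⟩, ?_, _, hη l hl.1, ?_⟩
  · rw [hη h hh.1]
    ring
  · simpa using hij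

end HeavyBases

section TwoHeavyHyperplanes

variable {A : Arrangement K ℓ} {m : (Fin ℓ → K) → ℕ} {U W : Submodule K (Fin ℓ → K)}
  {h l c c' : Fin ℓ → K}

/-- The localization at the flat encoded by `U` is a product of two arrangements in complementary
nonzero subspaces of `U`. As the covectors of the localization at a flat span `U`, this says that
its essential part is reducible. -/
def IsLocReducible (A : Arrangement K ℓ) (U : Submodule K (Fin ℓ → K)) : Prop :=
  ∃ W₁ W₂ : Submodule K (Fin ℓ → K), W₁ ≤ U ∧ W₂ ≤ U ∧ W₁ ≠ ⊥ ∧ W₂ ≠ ⊥ ∧ W₁ ⊓ W₂ = ⊥ ∧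
    W₁ ⊔ W₂ = U ∧ ∀ c ∈ locHyps A U, c ∈ W₁ ∨ c ∈ W₂

lemma forall_eq_or_forall_eq {ι α β : Type*} {s : Set ι} {a : ι → α} {b : ι → β}
    (hab : ∀ i ∈ s, ∀ j ∈ s, a i = a j ∨ b i = b j) :
    (∀ i ∈ s, ∀ j ∈ s, a i = a j) ∨ ∀ i ∈ s, ∀ j ∈ s, b i = b j := by
  by_contra! hne
  obtain ⟨⟨i, hi, j, hj, hij⟩, i', hi', j', hj', hij'⟩ := hne
  have hb (k) (hk : k ∈ s) : b k = b i := by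
    obtain hki | hki := hab k hk i hi
    · have hkj := (hab k hk j hj).resolve_left (hki ▸ hij)
      exact hkj.trans ((hab i hi j hj).resolve_left hij).symm
    · exact hki
  exact hij' ((hb i' hi').trans (hb j' hj').symm)

lemma Arrangement.span_pair_eq_of_mem (hh : h ∈ A.hyps) (hc : c ∈ A.hyps) (hne : c ≠ h)
    (hW : Module.finrank K W = 2) (hhW : h ∈ W) (hcW : c ∈ W) : Submodule.span K {h, c} = W :=
  Submodule.eq_of_le_of_finrank_eq (Submodule.span_le.mpr (Set.pair_subset hhW hcW))
    ((A.finrank_span_pair hh hc hne).trans hW.symm)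

lemma IsLocallyHeavy.sum_locHyps_le (hh : IsLocallyHeavy A m h) (hW : IsFlatOfRank A W 2)
    (hhW : h ∈ W) (hcard : 3 ≤ (locHyps A W).card) : ∑ c ∈ locHyps A W, m c ≤ 2 * m h := by
  rw [← Finset.add_sum_erase _ m (mem_locHyps.mpr ⟨hh.1, hhW⟩), two_mul]
  exact Nat.add_le_add_left (hh.2 W hW hhW hcard) _

lemma IsLocallyHeavy.notMem_span_pair_s14 (hh : IsLocallyHeavy A m h) (hl : IsLocallyHeavy A m l)
    (hhl : h ≠ l) (hc : c ∈ A.hyps) (hch : c ≠ h) (hcl : c ≠ l) (hm : 0 < m c) :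
    c ∉ Submodule.span K {h, l} := by
  intro hcW
  set W := Submodule.span K {h, l}
  have hW : IsFlatOfRank A W 2 := A.isFlatOfRank_span_pair hh.1 hl.1 hhl.symm
  have hsub : {h, l, c} ⊆ locHyps A W := by
    simp only [Finset.insert_subset_iff, Finset.singleton_subset_iff, mem_locHyps]
    exact ⟨⟨hh.1, left_mem_span_pair⟩, ⟨hl.1, right_mem_span_pair⟩, hc, hcW⟩
  have hcard : 3 ≤ (locHyps A W).card := by
    rw [← Finset.card_eq_three.mpr ⟨h, l, c, hhl, hch.symm, hcl.symm, rfl⟩]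
    exact Finset.card_le_card hsub
  have hsum : m h + (m l + m c) ≤ ∑ c ∈ locHyps A W, m c := by
    rw [← Finset.sum_pair hcl.symm, ← Finset.sum_insert (by simp [hhl, hch.symm])]
    exact Finset.sum_le_sum_of_subset hsub
  have hle_h := hh.sum_locHyps_le hW left_mem_span_pair hcard
  have hle_l := hl.sum_locHyps_le hW right_mem_span_pair hcard
  omega

lemma apply_linForm_mem_formIdeal_span {η : Der K ℓ} {s : Set (Fin ℓ → K)}
    (hη : ∀ c ∈ s, linForm c ∣ η (linForm c)) {x : Fin ℓ → K} (hx : x ∈ Submodule.span K s) :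
    η (linForm x) ∈ formIdeal (Submodule.span K s) := by
  induction hx using Submodule.span_induction with
  | mem c hc =>
    exact Ideal.mem_of_dvd _ (hη c hc) (linForm_mem_formIdeal (Submodule.mem_span_of_mem hc))
  | zero => simp [linForm]
  | add x y _ _ hx hy =>
    rw [linForm_add, map_add]
    exact add_mem hx hy
  | smul t x _ hx =>
    rw [linForm_smul, η.map_smul, smul_eq_C_mul]
    exact Ideal.mul_mem_left _ _ hx

/-- Otherwise some line through the origin lies in the flat of `W` but not in `ker l`, and
`linForm l ^ n * g` does not vanish identically on it. -/
lemma mem_of_linForm_pow_mul_mem_formIdeal {n : ℕ} {g : S K ℓ} (hg : constantCoeff g ≠ 0)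
    (hmem : linForm l ^ n * g ∈ formIdeal W) : l ∈ W := by
  by_contra hlW
  obtain ⟨v, hWv, hlv⟩ := exists_dotProduct_eq_one_of_notMem hlW
  let φ : S K ℓ →ₐ[K] Polynomial K := aeval fun j => v j • Polynomial.X
  have hφ (c : Fin ℓ → K) : φ (linForm c) = (c ⬝ᵥ v) • Polynomial.X := by
    simp only [φ, aeval_linForm_s14, smul_smul, ← Finset.sum_smul, dotProduct]
  have hker : formIdeal W ≤ RingHom.ker φ := by
    refine Ideal.span_le.mpr ?_
    rintro _ ⟨c, hc, rfl⟩
    rw [SetLike.mem_coe, RingHom.mem_ker, hφ, hWv c hc, zero_smul]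
  have hcoeff : (Polynomial.evalRingHom 0).comp (φ : S K ℓ →+* Polynomial K) = constantCoeff :=
    MvPolynomial.ringHom_ext (fun a => by simp) fun j => by simp [φ]
  have hφg : φ g ≠ 0 := by
    intro h0
    refine hg ((DFunLike.congr_fun hcoeff g).symm.trans ?_)
    simp [h0]
  refine mul_ne_zero (pow_ne_zero n Polynomial.X_ne_zero) hφg ?_
  simpa [hφ, hlv] using RingHom.mem_ker.mp (hker hmem)

lemma IsLogDer.mem_span_pair_or_mem_span_pair {η : Der K ℓ} (hη : IsLogDer A m η)
    (hηh : η (linForm h) = 0) {n : ℕ} {g : S K ℓ} (hηl : η (linForm l) = linForm l ^ n * g)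
    (hg : constantCoeff g ≠ 0) (hh : h ∈ A.hyps) (hl : l ∈ A.hyps) (hhl : h ≠ l)
    (hc : c ∈ A.hyps) (hc' : c' ∈ A.hyps) (hcc' : c ≠ c') (hmc : 0 < m c) (hmc' : 0 < m c')
    (hU : Module.finrank K U ≤ 3) (hhU : h ∈ U) (hlU : l ∈ U) (hcU : c ∈ U) (hc'U : c' ∈ U) :
    h ∈ Submodule.span K {c, c'} ∨ l ∈ Submodule.span K {c, c'} := by
  have hinf : Submodule.span K {h, l} ⊓ Submodule.span K {c, c'} ≠ ⊥ := by
    intro hbot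
    have hdim := Submodule.finrank_sup_add_finrank_inf_eq (Submodule.span K {h, l})
      (Submodule.span K {c, c'})
    have hsup : Submodule.span K {h, l} ⊔ Submodule.span K {c, c'} ≤ U :=
      sup_le (Submodule.span_le.mpr (Set.pair_subset hhU hlU))
        (Submodule.span_le.mpr (Set.pair_subset hcU hc'U))
    have hsup_dim := Submodule.finrank_mono hsup
    rw [hbot, finrank_bot, A.finrank_span_pair hh hl hhl.symm,
      A.finrank_span_pair hc hc' hcc'.symm] at hdim
    omega
  obtain ⟨x, ⟨hxhl, hxcc'⟩, hx0⟩ := (Submodule.ne_bot_iff _).mp hinf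
  obtain ⟨a, b, rfl⟩ := Submodule.mem_span_pair.mp hxhl
  obtain rfl | hb := eq_or_ne b 0
  · have ha : a ≠ 0 := by
      rintro rfl
      simp at hx0
    rw [zero_smul, add_zero] at hxcc'
    exact .inl ((Submodule.smul_mem_iff _ ha).mp hxcc')
  · have hdvd : ∀ d ∈ ({c, c'} : Set (Fin ℓ → K)), linForm d ∣ η (linForm d) := by
      rintro d (rfl | rfl)
      · exact (dvd_pow_self _ hmc.ne').trans (hη d hc)
      · exact (dvd_pow_self _ hmc'.ne').trans (hη d hc')
    have hmem := apply_linForm_mem_formIdeal_span hdvd hxcc'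
    rw [linForm_add, linForm_smul, linForm_smul, map_add, η.map_smul, η.map_smul, hηh, smul_zero,
      zero_add, hηl, ← mul_smul_comm] at hmem
    refine .inr (mem_of_linForm_pow_mul_mem_formIdeal ?_ hmem)
    rw [constantCoeff_smul, smul_eq_mul]
    exact mul_ne_zero hb hg

lemma IsLogDer.span_pair_eq_or_span_pair_eq {η : Der K ℓ} (hη : IsLogDer A m η)
    (hηh : η (linForm h) = 0) {n : ℕ} {g : S K ℓ} (hηl : η (linForm l) = linForm l ^ n * g)
    (hg : constantCoeff g ≠ 0) (hh : h ∈ A.hyps) (hl : l ∈ A.hyps) (hhl : h ≠ l)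
    (hm : ∀ c ∈ A.hyps, 0 < m c) (hU : Module.finrank K U ≤ 3) (hhU : h ∈ U) (hlU : l ∈ U)
    (hc : c ∈ locHyps A U) (hch : c ≠ h) (hcl : c ≠ l) (hc' : c' ∈ locHyps A U) (hc'h : c' ≠ h)
    (hc'l : c' ≠ l) :
    Submodule.span K {h, c} = Submodule.span K {h, c'} ∨
      Submodule.span K {l, c} = Submodule.span K {l, c'} := by
  obtain rfl | hcc' := eq_or_ne c c'
  · exact .inl rfl
  obtain ⟨hcA, hcU⟩ := mem_locHyps.mp hc
  obtain ⟨hc'A, hc'U⟩ := mem_locHyps.mp hc'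
  have heq {x : Fin ℓ → K} (hx : x ∈ A.hyps) (hcx : c ≠ x) (hc'x : c' ≠ x)
      (hxW : x ∈ Submodule.span K {c, c'}) :
      Submodule.span K {x, c} = Submodule.span K {x, c'} := by
    have hW := A.finrank_span_pair hcA hc'A hcc'.symm
    exact (A.span_pair_eq_of_mem hx hcA hcx hW hxW left_mem_span_pair).trans
      (A.span_pair_eq_of_mem hx hc'A hc'x hW hxW right_mem_span_pair).symm
  exact (hη.mem_span_pair_or_mem_span_pair hηh hηl hg hh hl hhl hcA hc'A hcc' (hm c hcA)
    (hm c' hc'A) hU hhU hlU hcU hc'U).imp (heq hh hch hc'h) (heq hl hcl hc'l)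

lemma IsFlatOfRank.exists_mem_locHyps_ne_ne (hU : IsFlatOfRank A U 3) (h l : Fin ℓ → K) :
    ∃ c ∈ locHyps A U, c ≠ h ∧ c ≠ l := by
  by_contra! hcon
  have hsub : (locHyps A U : Set (Fin ℓ → K)) ⊆ ({h, l} : Finset (Fin ℓ → K)) := fun c hc => by
    simpa [or_iff_not_imp_left] using hcon c hc
  have hle := (finrank_span_finset_le_card (R := K) (locHyps A U)).trans
    ((Finset.card_le_card (by exact_mod_cast hsub)).trans Finset.card_le_two)
  rw [Set.finrank, hU.2, hU.1] at hle
  omega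

lemma isLocReducible_of_forall_eq_or_mem (hU : Submodule.span K (locHyps A U : Set (Fin ℓ → K)) = U)
    (hlU : l ∈ U) (hlW : l ∉ W) (hWU : W ≤ U) (hW : W ≠ ⊥)
    (hmem : ∀ c ∈ locHyps A U, c = l ∨ c ∈ W) : IsLocReducible A U := by
  have hl0 : l ≠ 0 := fun h0 => hlW (h0 ▸ W.zero_mem)
  have hlU_le : Submodule.span K {l} ≤ U := (Submodule.span_singleton_le_iff_mem l U).mpr hlU
  have hmem' (c) (hc : c ∈ locHyps A U) : c ∈ Submodule.span K {l} ∨ c ∈ W :=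
    (hmem c hc).imp_left fun hcl => Submodule.mem_span_singleton.mpr ⟨1, by rw [one_smul, hcl]⟩
  refine ⟨Submodule.span K {l}, W, hlU_le, hWU, mt Submodule.span_singleton_eq_bot.mp hl0, hW,
    (Submodule.disjoint_span_singleton_of_notMem hlW).symm.eq_bot, ?_, hmem'⟩
  refine le_antisymm (sup_le hlU_le hWU) ?_
  conv_lhs => rw [← hU]
  exact Submodule.span_le.mpr fun c hc =>
    (hmem' c hc).elim (fun hcl => Submodule.mem_sup_left hcl) fun hcW => Submodule.mem_sup_right hcW

lemma IsLocallyHeavy.isLocReducible (hh : IsLocallyHeavy A m h) (hl : IsLocallyHeavy A m l)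
    (hhl : h ≠ l) (hU : Submodule.span K (locHyps A U : Set (Fin ℓ → K)) = U) (hhU : h ∈ U)
    (hlU : l ∈ U) (hc : c ∈ locHyps A U) (hch : c ≠ h) (hcl : c ≠ l) (hm : 0 < m c)
    (hspan : ∀ d ∈ locHyps A U, d ≠ h → d ≠ l →
      Submodule.span K {h, d} = Submodule.span K {h, c}) : IsLocReducible A U := by
  obtain ⟨hcA, hcU⟩ := mem_locHyps.mp hc
  have hl_notMem : l ∉ Submodule.span K {h, c} := by
    intro hlc
    have heq := A.span_pair_eq_of_mem hh.1 hl.1 hhl.symm (A.finrank_span_pair hh.1 hcA hch)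
      left_mem_span_pair hlc
    exact hh.notMem_span_pair_s14 hl hhl hcA hch hcl hm (heq ▸ right_mem_span_pair)
  refine isLocReducible_of_forall_eq_or_mem hU hlU hl_notMem
    (Submodule.span_le.mpr (Set.pair_subset hhU hcU))
    ((Submodule.ne_bot_iff _).mpr ⟨h, left_mem_span_pair, A.ne_zero h hh.1⟩) fun d hd => ?_
  refine or_iff_not_imp_left.mpr fun hdl => ?_
  obtain rfl | hdh := eq_or_ne d h
  · exact left_mem_span_pair
  · exact hspan d hd hdh hdl ▸ right_mem_span_pair

end TwoHeavyHyperplanes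

theorem stmt14_general (A : Arrangement K ℓ) (m : (Fin ℓ → K) → ℕ) (hm : ∀ c ∈ A.hyps, 0 < m c)
    (cH cL : Fin ℓ → K) (hne : cH ≠ cL) (hH : IsLocallyHeavy A m cH) (hL : IsLocallyHeavy A m cL)
    (U : Submodule K (Fin ℓ → K)) (hU : IsFlatOfRank A U 3) (hHU : cH ∈ U) (hLU : cL ∈ U)
    (hirr : ¬ IsLocReducible A U) : ¬ ∃ θ : Fin ℓ → Der K ℓ, IsDerBasis A m θ := by
  rintro ⟨θ, hθ⟩
  obtain ⟨η, hη, hηH, g, hηL, hg⟩ :=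
    hθ.exists_isLogDer_apply_eq_zero hH hL hne (hm cH hH.1) (hm cL hL.1)
  let T : Set (Fin ℓ → K) := {c | c ∈ locHyps A U ∧ c ≠ cH ∧ c ≠ cL}
  have hpair : ∀ c ∈ T, ∀ c' ∈ T, Submodule.span K {cH, c} = Submodule.span K {cH, c'} ∨
      Submodule.span K {cL, c} = Submodule.span K {cL, c'} :=
    fun c ⟨hc, hcH, hcL⟩ c' ⟨hc', hc'H, hc'L⟩ => hη.span_pair_eq_or_span_pair_eq hηH hηL hg hH.1
      hL.1 hne hm hU.1.le hHU hLU hc hcH hcL hc' hc'H hc'L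
  obtain ⟨c, hc, hcH, hcL⟩ := hU.exists_mem_locHyps_ne_ne cH cL
  have hmc : 0 < m c := hm c (mem_locHyps.mp hc).1
  obtain hspan | hspan := forall_eq_or_forall_eq hpair
  · exact hirr (hH.isLocReducible hL hne hU.2 hHU hLU hc hcH hcL hmc fun d hd hdH hdL =>
      hspan d ⟨hd, hdH, hdL⟩ c ⟨hc, hcH, hcL⟩)
  · exact hirr (hL.isLocReducible hH hne.symm hU.2 hLU hHU hc hcL hcH hmc fun d hd hdL hdH =>
      hspan d ⟨hd, hdH, hdL⟩ c ⟨hc, hcH, hcL⟩)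

theorem stmt14 (A : Arrangement K ℓ) (hℓ : 3 < ℓ) (hr : rank A = ℓ)
    (m : (Fin ℓ → K) → ℕ) (hm : ∀ c ∈ A.hyps, 0 < m c)
    (cH cL : Fin ℓ → K) (hne : cH ≠ cL)
    (hH : IsLocallyHeavy A m cH) (hL : IsLocallyHeavy A m cL)
    (U : Submodule K (Fin ℓ → K)) (hU : IsFlatOfRank A U 3)
    (hHU : cH ∈ U) (hLU : cL ∈ U)
    (hirr : ¬ ∃ W₁ W₂ : Submodule K (Fin ℓ → K), W₁ ≤ U ∧ W₂ ≤ U ∧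
      W₁ ≠ ⊥ ∧ W₂ ≠ ⊥ ∧ W₁ ⊓ W₂ = ⊥ ∧ W₁ ⊔ W₂ = U ∧
      ∀ c ∈ locHyps A U, c ∈ W₁ ∨ c ∈ W₂) :
    ¬ IsFree A m := by
  exact fun ⟨_, θ, _, hθ⟩ => stmt14_general A m hm cH cL hne hH hL U hU hHU hLU hirr ⟨θ, hθ⟩

end ArrPaper
end
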